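/- Let f : 𝔤 → 𝔥 be a quasi-isomorphism of differential graded Lie algebras over a field k of characteristic zero. Then the induced map of universal enveloping algebras U(𝔤) → U(𝔥) is a quasi-isomorphism of differential graded associative algebras. In particular, for any dgla 𝔤, the map k = U(0) → U(Cn(𝔤)) is a quasi-isomorphism. -/

import Mathlib

open TensorProduct

universe u

/-- Transport along an equality of degrees. -/
def gcast {C : ℤ → Type u} {i j : ℤ} (h : i = j) (x : C i) : C j := h ▸ x

/-- Transport along an equality of degrees, as a linear map. -/
def lgcast {K : Type u} [Field K] {C : ℤ → Type u} [∀ i, AddCommGroup (C i)]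
    [∀ i, Module K (C i)] {i j : ℤ} (h : i = j) : C i →ₗ[K] C j :=
  h ▸ LinearMap.id

/-- A differential graded Lie algebra over `K`, given by its graded pieces. -/
class DGLA (K : Type u) [Field K] (A : ℤ → Type u)
    [∀ i, AddCommGroup (A i)] [∀ i, Module K (A i)] where
  d : ∀ i, A i →ₗ[K] A (i + 1)
  bk : ∀ i j, A i →ₗ[K] A j →ₗ[K] A (i + j)
  d_sq : ∀ i (x : A i), d (i + 1) (d i x) = 0
  antisymm : ∀ i j (x : A i) (y : A j),
    bk j i y x = gcast (add_comm i j) (-(((-1 : K) ^ (i * j)) • bk i j x y))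
  jacobi : ∀ p q r (x : A p) (y : A q) (z : A r),
    bk p (q + r) x (bk q r y z)
      = gcast (show p + q + r = p + (q + r) by ring) (bk (p + q) r (bk p q x y) z)
        + ((-1 : K) ^ (p * q)) •
          gcast (show q + (p + r) = p + (q + r) by ring) (bk q (p + r) y (bk p r x z))
  leibniz : ∀ i j (x : A i) (y : A j),
    d (i + j) (bk i j x y)
      = gcast (show i + 1 + j = i + j + 1 by ring) (bk (i + 1) j (d i x) y)
        + ((-1 : K) ^ i) •
          gcast (show i + (j + 1) = i + j + 1 by ring) (bk i (j + 1) x (d j y))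

/-- A representation of a differential graded Lie algebra, following Budur–Wang's sign
convention `[x,y]v = x(yv) + (-1)^{pq} y(xv)`. -/
class DGLARep (K : Type u) [Field K] (A : ℤ → Type u)
    [∀ i, AddCommGroup (A i)] [∀ i, Module K (A i)] [DGLA K A]
    (V : ℤ → Type u) [∀ i, AddCommGroup (V i)] [∀ i, Module K (V i)] where
  dV : ∀ i, V i →ₗ[K] V (i + 1)
  ρ : ∀ p j, A p →ₗ[K] V j →ₗ[K] V (p + j)
  dV_sq : ∀ i (v : V i), dV (i + 1) (dV i v) = 0
  leibniz : ∀ p j (x : A p) (v : V j),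
    dV (p + j) (ρ p j x v)
      = gcast (show p + 1 + j = p + j + 1 by ring) (ρ (p + 1) j (DGLA.d (K := K) (A := A) p x) v)
        + ((-1 : K) ^ p) •
          gcast (show p + (j + 1) = p + j + 1 by ring) (ρ p (j + 1) x (dV j v))
  compat : ∀ p q j (x : A p) (y : A q) (v : V j),
    ρ (p + q) j (DGLA.bk (K := K) (A := A) p q x y) v
      = gcast (show p + (q + j) = p + q + j by ring) (ρ p (q + j) x (ρ q j y v))
        + ((-1 : K) ^ (p * q)) •
          gcast (show q + (p + j) = p + q + j by ring) (ρ q (p + j) y (ρ p j x v))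
section DGAlg

/-- A differential graded (unital, associative) algebra over `K`, given by its graded pieces. -/
class DGAlg (K : Type u) [Field K] (B : ℤ → Type u)
    [∀ i, AddCommGroup (B i)] [∀ i, Module K (B i)] where
  mul : ∀ i j, B i →ₗ[K] B j →ₗ[K] B (i + j)
  one : B 0
  d : ∀ i, B i →ₗ[K] B (i + 1)
  d_sq : ∀ i (x : B i), d (i + 1) (d i x) = 0
  mul_assoc : ∀ p q r (x : B p) (y : B q) (z : B r),
    mul (p + q) r (mul p q x y) z
      = gcast (show p + (q + r) = p + q + r by ring) (mul p (q + r) x (mul q r y z))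
  one_mul : ∀ i (x : B i), mul 0 i one x = gcast (show i = 0 + i by ring) x
  mul_one : ∀ i (x : B i), mul i 0 x one = gcast (show i = i + 0 by ring) x
  leibniz : ∀ i j (x : B i) (y : B j),
    d (i + j) (mul i j x y)
      = gcast (show i + 1 + j = i + j + 1 by ring) (mul (i + 1) j (d i x) y)
        + ((-1 : K) ^ i) •
          gcast (show i + (j + 1) = i + j + 1 by ring) (mul i (j + 1) x (d j y))
  d_one : d 0 one = 0

variable (K : Type u) [Field K]

/-- A morphism of differential graded algebras. -/
structure DGAlgHom (B C : ℤ → Type u)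
    [∀ i, AddCommGroup (B i)] [∀ i, Module K (B i)] [DGAlg K B]
    [∀ i, AddCommGroup (C i)] [∀ i, Module K (C i)] [DGAlg K C] where
  f : ∀ i, B i →ₗ[K] C i
  map_d : ∀ i (x : B i), f (i + 1) (DGAlg.d (K := K) (B := B) i x)
    = DGAlg.d (K := K) (B := C) i (f i x)
  map_mul : ∀ i j (x : B i) (y : B j),
    f (i + j) (DGAlg.mul (K := K) (B := B) i j x y)
      = DGAlg.mul (K := K) (B := C) i j (f i x) (f j y)
  map_one : f 0 (DGAlg.one (K := K) (B := B)) = DGAlg.one (K := K) (B := C)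

/-- A morphism of differential graded Lie algebras. -/
structure DGLAHom (A A' : ℤ → Type u)
    [∀ i, AddCommGroup (A i)] [∀ i, Module K (A i)] [DGLA K A]
    [∀ i, AddCommGroup (A' i)] [∀ i, Module K (A' i)] [DGLA K A'] where
  f : ∀ i, A i →ₗ[K] A' i
  map_d : ∀ i (x : A i), f (i + 1) (DGLA.d (K := K) (A := A) i x)
    = DGLA.d (K := K) (A := A') i (f i x)
  map_bk : ∀ i j (x : A i) (y : A j),
    f (i + j) (DGLA.bk (K := K) (A := A) i j x y)
      = DGLA.bk (K := K) (A := A') i j (f i x) (f j y)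

/-- A map from a dgla to a dg algebra sending the bracket to the graded commutator:
`φ([x,y]) = φ(x)φ(y) - (-1)^{ij} φ(y)φ(x)`. -/
structure LieToAlgMap (A : ℤ → Type u)
    [∀ i, AddCommGroup (A i)] [∀ i, Module K (A i)] [DGLA K A]
    (B : ℤ → Type u) [∀ i, AddCommGroup (B i)] [∀ i, Module K (B i)] [DGAlg K B] where
  f : ∀ i, A i →ₗ[K] B i
  map_d : ∀ i (x : A i), f (i + 1) (DGLA.d (K := K) (A := A) i x)
    = DGAlg.d (K := K) (B := B) i (f i x)
  map_bk : ∀ i j (x : A i) (y : A j),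
    f (i + j) (DGLA.bk (K := K) (A := A) i j x y)
      = DGAlg.mul (K := K) (B := B) i j (f i x) (f j y)
        - ((-1 : K) ^ (i * j)) •
          gcast (C := B) (show j + i = i + j by ring)
            (DGAlg.mul (K := K) (B := B) j i (f j y) (f i x))

/-- `(U, ι)` is a universal enveloping algebra of the dgla `A`: every map from `A` to a dg
algebra sending brackets to graded commutators factors uniquely through `ι`. -/
structure IsEnvelope (A : ℤ → Type u)
    [∀ i, AddCommGroup (A i)] [∀ i, Module K (A i)] [DGLA K A]
    (U : ℤ → Type u) [∀ i, AddCommGroup (U i)] [∀ i, Module K (U i)] [DGAlg K U]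
    (ι : LieToAlgMap K A U) : Prop where
  universal : ∀ (B : ℤ → Type u) (_ : ∀ i, AddCommGroup (B i)) (_ : ∀ i, Module K (B i))
    (_ : DGAlg K B) (φ : LieToAlgMap K A B),
    ∃! Φ : DGAlgHom K U B, ∀ i (x : A i), Φ.f i (ι.f i x) = φ.f i x

/-- A family of linear maps between graded complexes is a quasi-isomorphism if it induces a
bijection on all cohomology groups. -/
def IsQIsoMap {C D : ℤ → Type u}
    [∀ i, AddCommGroup (C i)] [∀ i, Module K (C i)]
    [∀ i, AddCommGroup (D i)] [∀ i, Module K (D i)]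
    (dC : ∀ i, C i →ₗ[K] C (i + 1)) (dD : ∀ i, D i →ₗ[K] D (i + 1))
    (f : ∀ i, C i →ₗ[K] D i) : Prop :=
  (∀ (i : ℤ) (y : D i), dD i y = 0 →
    ∃ (x : C i) (z : D (i - 1)), dC i x = 0 ∧
      f i x = y + gcast (C := D) (show i - 1 + 1 = i by omega) (dD (i - 1) z)) ∧
  (∀ (i : ℤ) (x : C i), dC i x = 0 →
    (∃ z : D (i - 1), f i x = gcast (C := D) (show i - 1 + 1 = i by omega) (dD (i - 1) z)) →
    ∃ w : C (i - 1), x = gcast (C := C) (show i - 1 + 1 = i by omega) (dC (i - 1) w))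

end DGAlg

namespace PBWProof
section homological
variable {K : Type u} [Field K]

/-- ungraded quasi-isomorphism -/
def QI {V W : Type u} [AddCommGroup V] [Module K V] [AddCommGroup W] [Module K W]
    (D : V →ₗ[K] V) (D' : W →ₗ[K] W) (f : V →ₗ[K] W) : Prop :=
  (∀ y, D' y = 0 → ∃ x z, D x = 0 ∧ f x = y + D' z) ∧
  (∀ x, D x = 0 → (∃ z, f x = D' z) → ∃ w, x = D w)

/-- homotopy equivalence with parity -/
def HE {V W : Type u} [AddCommGroup V] [Module K V] [AddCommGroup W] [Module K W]
    (ε D : V →ₗ[K] V) (ε' D' : W →ₗ[K] W) (f : V →ₗ[K] W) : Prop :=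
  ∃ (g : W →ₗ[K] V) (k : V →ₗ[K] V) (k' : W →ₗ[K] W),
    (∀ y, g (D' y) = D (g y)) ∧ (∀ y, g (ε' y) = ε (g y)) ∧
    (∀ x, k (ε x) = - ε (k x)) ∧ (∀ y, k' (ε' y) = - ε' (k' y)) ∧
    (∀ x, g (f x) = x + D (k x) + k (D x)) ∧
    (∀ y, f (g y) = y + D' (k' y) + k' (D' y))

variable {V W : Type u} [AddCommGroup V] [Module K V] [AddCommGroup W] [Module K W]

theorem contract (D : V →ₗ[K] V) (hD : ∀ x, D (D x) = 0)
    (hac : ∀ x, D x = 0 → ∃ y, D y = x) :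
    ∃ k : V →ₗ[K] V, ∀ x, D (k x) + k (D x) = x := by
  let D0 : V →ₗ[K] LinearMap.ker D := D.codRestrict _ (fun x => by simp [hD])
  have hs : Function.Surjective D0 := by
    rintro ⟨x, hx⟩
    obtain ⟨y, hy⟩ := hac x hx
    exact ⟨y, Subtype.ext hy⟩
  obtain ⟨σ, hσ⟩ := LinearMap.exists_rightInverse_of_surjective D0 (LinearMap.range_eq_top.2 hs)
  have h1 : ∀ z : LinearMap.ker D, D (σ z) = z := fun z => by
    have := congrArg (fun φ => ((φ z : LinearMap.ker D) : V)) hσ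
    exact this
  let p : V →ₗ[K] LinearMap.ker D := (LinearMap.id - σ ∘ₗ D0).codRestrict _ (fun x => by
    simp [h1]; simp [D0])
  refine ⟨σ ∘ₗ p, fun x => ?_⟩
  have h2 : p (D x) = D0 x := Subtype.ext (by
    have : D0 (D x) = 0 := Subtype.ext (hD x)
    simp [p, this]; rfl)
  have h3 : ((p x : LinearMap.ker D) : V) = x - σ (D0 x) := rfl
  simp only [LinearMap.comp_apply, h1, h2, h3]
  abel

theorem he_of_qi [CharZero K] (ε D : V →ₗ[K] V) (ε' D' : W →ₗ[K] W) (f : V →ₗ[K] W)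
    (hD : ∀ x, D (D x) = 0) (hD' : ∀ x, D' (D' x) = 0) (hf : ∀ x, f (D x) = D' (f x))
    (hfe : ∀ x, f (ε x) = ε' (f x))
    (he : ∀ x, ε (ε x) = x) (he' : ∀ x, ε' (ε' x) = x)
    (heD : ∀ x, ε (D x) = - D (ε x)) (heD' : ∀ x, ε' (D' x) = - D' (ε' x))
    (h : QI D D' f) : HE ε D ε' D' f := by
  let C : (V × W) →ₗ[K] (V × W) :=
    LinearMap.prod (-(D ∘ₗ LinearMap.fst K V W)) (f ∘ₗ LinearMap.fst K V W + D' ∘ₗ LinearMap.snd K V W)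
  have hC : ∀ v w, C (v, w) = (-D v, f v + D' w) := fun v w => rfl
  obtain ⟨k, hk⟩ := contract C (by rintro ⟨v, w⟩; simp [hC, hD, hD', hf]) (by
    rintro ⟨v, w⟩ hvw
    simp only [hC, Prod.mk_eq_zero, neg_eq_zero] at hvw
    obtain ⟨u, hu⟩ := h.2 v hvw.1 ⟨-w, by rw [map_neg]; exact eq_neg_of_add_eq_zero_left hvw.2⟩
    have : D' (w + f u) = 0 := by rw [map_add, ← hf, ← hu, add_comm]; exact hvw.2
    obtain ⟨x, z, hx, hxz⟩ := h.1 _ this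
    refine ⟨(-u + x, - z), ?_⟩
    simp [hC, hx, hxz, ← hu]
    abel)
  let g : W →ₗ[K] V := LinearMap.fst K V W ∘ₗ k ∘ₗ LinearMap.inr K V W
  let a : V →ₗ[K] V := LinearMap.fst K V W ∘ₗ k ∘ₗ LinearMap.inl K V W
  let e : W →ₗ[K] W := LinearMap.snd K V W ∘ₗ k ∘ₗ LinearMap.inr K V W
  let c : V →ₗ[K] W := LinearMap.snd K V W ∘ₗ k ∘ₗ LinearMap.inl K V W
  have hkk : ∀ v w, k (v, w) = (a v + g w, c v + e w) := fun v w => by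
    have : (v, w) = LinearMap.inl K V W v + LinearMap.inr K V W w := by simp
    rw [this, map_add]
    rfl
  have H1 : ∀ y, g (D' y) = D (g y) := fun y => by
    have := congrArg Prod.fst (hk (0, y))
    simp [hC, hkk] at this
    rw [neg_add_eq_zero] at this
    exact this.symm
  have H2 : ∀ x, g (f x) = x + D (a x) + a (D x) := fun x => by
    have := congrArg Prod.fst (hk (x, 0))
    simp [hC, hkk] at this
    nth_rw 2 [← this]; abel
  have H3 : ∀ y, f (g y) = y - D' (e y) - e (D' y) := fun y => by
    have := congrArg Prod.snd (hk (0, y))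
    simp [hC, hkk] at this
    nth_rw 2 [← this]; abel
  refine ⟨(1/2:K) • (g + ε ∘ₗ g ∘ₗ ε'), (1/2:K) • (a - ε ∘ₗ a ∘ₗ ε), -((1/2:K) • (e - ε' ∘ₗ e ∘ₗ ε')), ?_, ?_, ?_, ?_, ?_, ?_⟩
  · intro y; simp [H1, heD, heD']
  · intro y; simp [he, he']; rw [add_comm]
  · intro y; simp [he, ← smul_neg]
  · intro y; simp [he', ← smul_neg]
  · intro x
    simp only [LinearMap.smul_apply, LinearMap.add_apply, LinearMap.comp_apply, LinearMap.sub_apply, H2, ← hfe, map_add, he, map_smul, map_sub]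
    simp only [heD, map_neg]
    module
  · intro x
    simp only [LinearMap.smul_apply, LinearMap.add_apply, LinearMap.comp_apply, LinearMap.sub_apply, LinearMap.neg_apply, H3, hfe, map_add, he', map_smul, map_sub, map_neg, ← smul_neg]
    simp only [heD', map_neg]
    module

theorem qi_of_he (ε D : V →ₗ[K] V) (ε' D' : W →ₗ[K] W) (f : V →ₗ[K] W)
    (h : HE ε D ε' D' f) : QI D D' f := by
  obtain ⟨g, k, k', h1, -, -, -, h5, h6⟩ := h
  refine ⟨fun y hy => ⟨g y, k' y, ?_, ?_⟩, fun x hx ⟨z, hz⟩ => ⟨g z - k x, ?_⟩⟩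
  · rw [← h1, hy, map_zero]
  · rw [h6, hy, map_zero, add_zero]
  · have := h5 x
    rw [hx, map_zero, add_zero, hz, h1] at this
    rw [map_sub, this]; abel

/-- homotopy equivalences tensor -/
theorem he_tensor {V₂ W₂ : Type u} [AddCommGroup V₂] [Module K V₂] [AddCommGroup W₂] [Module K W₂]
    (ε D : V →ₗ[K] V) (ε' D' : W →ₗ[K] W) (f : V →ₗ[K] W)
    (ε₂ D₂ : V₂ →ₗ[K] V₂) (ε₂' D₂' : W₂ →ₗ[K] W₂) (f₂ : V₂ →ₗ[K] W₂)
    (he : ∀ x, ε (ε x) = x) (he' : ∀ x, ε' (ε' x) = x)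
    (heD : ∀ x, ε (D x) = - D (ε x)) (heD' : ∀ x, ε' (D' x) = - D' (ε' x))
    (hf₂ : ∀ x, f₂ (D₂ x) = D₂' (f₂ x)) (hfe₂ : ∀ x, f₂ (ε₂ x) = ε₂' (f₂ x))
    (h : HE ε D ε' D' f) (h₂ : HE ε₂ D₂ ε₂' D₂' f₂) :
    HE (TensorProduct.map ε ε₂) (TensorProduct.map D LinearMap.id + TensorProduct.map ε D₂)
       (TensorProduct.map ε' ε₂') (TensorProduct.map D' LinearMap.id + TensorProduct.map ε' D₂')
       (TensorProduct.map f f₂) := by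
  obtain ⟨g, k, k', h1, h2, h3, h4, h5, h6⟩ := h
  obtain ⟨g₂, k₂, k₂', i1, i2, i3, i4, i5, i6⟩ := h₂
  refine ⟨TensorProduct.map g g₂, TensorProduct.map k (g₂ ∘ₗ f₂) + TensorProduct.map ε k₂,
    TensorProduct.map k' (f₂ ∘ₗ g₂) + TensorProduct.map ε' k₂', ?_, ?_, ?_, ?_, ?_, ?_⟩
  all_goals
    refine fun x => x.induction_on (by simp) ?_ (fun a b ha hb => by
      simp only [map_add, ha, hb] <;> abel)
    intro x y
    simp only [LinearMap.add_apply, TensorProduct.map_tmul, map_add, LinearMap.comp_apply, LinearMap.id_apply]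
  · rw [h1, i1, h2]
  · rw [h2, i2]
  · rw [h3, hfe₂, i2, i3]; simp [neg_tmul, tmul_neg]; abel
  · rw [h4, i2, hfe₂, i4]; simp [neg_tmul, tmul_neg]; abel
  · rw [h3, he, hf₂, i1, heD, h5, i5]
    simp [neg_tmul, tmul_neg, add_tmul, tmul_add, i5]
    abel
  · rw [h4, he', i1, hf₂, heD', h6, i6]
    simp [neg_tmul, tmul_neg, add_tmul, tmul_add, i6]
    abel

/-- retracts of quasi-isomorphisms -/
theorem qi_retract {V₂ W₂ : Type u} [AddCommGroup V₂] [Module K V₂] [AddCommGroup W₂] [Module K W₂]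
    (D : V →ₗ[K] V) (D' : W →ₗ[K] W) (f : V →ₗ[K] W)
    (D₂ : V₂ →ₗ[K] V₂) (D₂' : W₂ →ₗ[K] W₂) (f₂ : V₂ →ₗ[K] W₂)
    (s : V₂ →ₗ[K] V) (p : V →ₗ[K] V₂) (s' : W₂ →ₗ[K] W) (p' : W →ₗ[K] W₂)
    (hs : ∀ x, s (D₂ x) = D (s x)) (hp : ∀ x, p (D x) = D₂ (p x))
    (hs' : ∀ x, s' (D₂' x) = D' (s' x)) (hp' : ∀ x, p' (D' x) = D₂' (p' x))
    (hps : ∀ x, p (s x) = x) (hps' : ∀ x, p' (s' x) = x)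
    (h1 : ∀ x, f (s x) = s' (f₂ x)) (h2 : ∀ x, f₂ (p x) = p' (f x))
    (h : QI D D' f) : QI D₂ D₂' f₂ := by
  refine ⟨fun y hy => ?_, fun x hx ⟨z, hz⟩ => ?_⟩
  · obtain ⟨x, z, hx, hxz⟩ := h.1 (s' y) (by rw [← hs', hy, map_zero])
    exact ⟨p x, p' z, by rw [← hp, hx, map_zero], by rw [h2, hxz, map_add, hps', hp']⟩
  · obtain ⟨w, hw⟩ := h.2 (s x) (by rw [← hs, hx, map_zero]) ⟨s' z, by rw [h1, hz, hs']⟩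
    exact ⟨p w, by rw [← hp, ← hw, hps]⟩

end homological

section symmetrizer
variable {K : Type u} [Field K] {N N' : Type u} [AddCommGroup N] [Module K N]
  [AddCommGroup N'] [Module K N']

/-- sum of coset representatives -/
noncomputable def Csum (s : ℕ → Module.End K N) : ℕ → Module.End K N
  | 0 => 1
  | m + 1 => 1 + s m * Csum s m

/-- symmetrizer -/
noncomputable def Qsym (s : ℕ → Module.End K N) : ℕ → Module.End K N
  | 0 => 1
  | m + 1 => (1 / ((m : K) + 2)) • (Qsym s m * Csum s (m + 1))

/-- Coxeter relations for the first `m` generators -/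
structure Cox (s : ℕ → Module.End K N) (m : ℕ) : Prop where
  sq : ∀ i, i < m → s i * s i = 1
  comm : ∀ i j, i + 2 ≤ j → j < m → s i * s j = s j * s i
  braid : ∀ i, i + 1 < m → s i * s (i + 1) * s i = s (i + 1) * s i * s (i + 1)

theorem Cox.mono {s : ℕ → Module.End K N} {m n : ℕ} (h : Cox s n) (hmn : m ≤ n) : Cox s m :=
  ⟨fun i hi => h.sq i (by omega), fun i j hij hj => h.comm i j hij (by omega),
    fun i hi => h.braid i (by omega)⟩

theorem Csum_comm {s : ℕ → Module.End K N} {n : ℕ} (h : Cox s n) (j m : ℕ) (hj : j < n) (hm : m < j) :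
    Csum s m * s j = s j * Csum s m := by
  induction m with
  | zero => simp [Csum]
  | succ m ih =>
    simp only [Csum, add_mul, mul_add, one_mul, mul_one, mul_assoc, ih (by omega)]
    rw [← mul_assoc, h.comm m j (by omega) hj, mul_assoc]

theorem Csum_absorb {s : ℕ → Module.End K N} (m : ℕ) (h : Cox s m) (i : ℕ) (hi : i < m)
    (Q : Module.End K N) (hQ : ∀ j, j + 1 < m → Q * s j = Q) :
    Q * Csum s m * s i = Q * Csum s m := by
  induction m generalizing i Q with
  | zero => omega
  | succ m ih =>
    rcases Nat.lt_succ_iff_lt_or_eq.1 hi with hi | rfl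
    · have := ih (h.mono (by omega)) i hi (Q * s m) (fun j hj => by
        rw [mul_assoc, ← h.comm j m (by omega) (by omega), ← mul_assoc, hQ j (by omega)])
      simp only [Csum, mul_add, add_mul, mul_one]
      rw [hQ i (by omega), ← mul_assoc, this]
    · cases i with
      | zero => simp [Csum, mul_add, add_mul, mul_assoc, h.sq 0 (by omega)]; abel
      | succ m =>
        simp only [Csum, mul_add, add_mul, mul_one, mul_assoc]
        rw [h.sq _ (by omega), Csum_comm (n := m+2) h (m+1) m (by omega) (by omega)]
        have hb := h.braid m (by omega)
        have : Q * (s (m+1) * (s m * (s (m+1) * Csum s m))) = Q * (s (m+1) * (s m * Csum s m)) := by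
          calc _ = Q * (s (m+1) * s m * s (m+1)) * Csum s m := by simp only [mul_assoc]
            _ = (Q * s m) * s (m+1) * s m * Csum s m := by rw [← hb]; simp only [mul_assoc]
            _ = _ := by rw [hQ m (by omega)]; simp only [mul_assoc]
        rw [this, mul_one]; abel

theorem Qsym_absorb {s : ℕ → Module.End K N} (m : ℕ) (h : Cox s m) (i : ℕ) (hi : i < m) :
    Qsym s m * s i = Qsym s m := by
  induction m generalizing i with
  | zero => omega
  | succ m ih =>
    simp only [Qsym, smul_mul_assoc]
    rw [Csum_absorb (m+1) h i hi _ (fun j hj => ih (h.mono (by omega)) j (by omega))]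

theorem Csum_inter (s : ℕ → Module.End K N) (s' : ℕ → Module.End K N') (X : N →ₗ[K] N') (m : ℕ)
    (h : ∀ i, i < m → ∀ x, X (s i x) = s' i (X x)) (x : N) : X (Csum s m x) = Csum s' m (X x) := by
  induction m generalizing x with
  | zero => rfl
  | succ m ih => simp [Csum, h m (by omega), ih (fun i hi => h i (by omega))]

theorem Qsym_inter (s : ℕ → Module.End K N) (s' : ℕ → Module.End K N') (X : N →ₗ[K] N') (m : ℕ)
    (h : ∀ i, i < m → ∀ x, X (s i x) = s' i (X x)) (x : N) : X (Qsym s m x) = Qsym s' m (X x) := by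
  induction m generalizing x with
  | zero => rfl
  | succ m ih =>
    simp only [Qsym, LinearMap.smul_apply, map_smul, Module.End.mul_apply]
    rw [ih (fun i hi => h i (by omega)), Csum_inter s s' X _ h]

theorem Csum_one (m : ℕ) (x : N) : Csum (fun _ => (1 : Module.End K N)) m x = ((m : K) + 1) • x := by
  induction m with
  | zero => simp [Csum]
  | succ m ih => simp [Csum, ih, add_smul]; abel

theorem Qsym_one [CharZero K] (m : ℕ) (x : N) : Qsym (fun _ => (1 : Module.End K N)) m x = x := by
  induction m with
  | zero => simp [Qsym]
  | succ m ih =>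
    simp only [Qsym, LinearMap.smul_apply, Module.End.mul_apply, Csum_one, map_smul, ih, smul_smul]
    have : (m:K) + 2 ≠ 0 := by exact_mod_cast (by omega : m + 2 ≠ 0)
    have h2 : (1 / ((m:K)+2)) * (((m+1 : ℕ) : K) + 1) = 1 := by
      push_cast; field_simp; ring
    rw [h2, one_smul]

end symmetrizer
end PBWProof

namespace PBWProof
section tower
variable (K : Type u) [Field K] (V : Type u) [AddCommGroup V] [Module K V]

/-- tensor powers, bundled -/
noncomputable def Tmod : ℕ → ModuleCat.{u} K
  | 0 => ModuleCat.of K K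
  | n + 1 => ModuleCat.of K (V ⊗[K] Tmod n)

/-- tensor powers -/
def TP (n : ℕ) : Type u := Tmod K V n

noncomputable instance (n : ℕ) : AddCommGroup (TP K V n) := inferInstanceAs (AddCommGroup (Tmod K V n))
noncomputable instance (n : ℕ) : Module K (TP K V n) := inferInstanceAs (Module K (Tmod K V n))

/-- the zeroth tensor power -/
noncomputable def tE0 : TP K V 0 ≃ₗ[K] K := LinearEquiv.refl K (Tmod K V 0)

/-- the successor tensor power -/
noncomputable def tE (n : ℕ) : TP K V (n + 1) ≃ₗ[K] V ⊗[K] TP K V n := LinearEquiv.refl K (Tmod K V (n + 1))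

variable {K V}

/-- prepend a vector -/
noncomputable def cons {n : ℕ} : V →ₗ[K] TP K V n →ₗ[K] TP K V (n + 1) :=
  (TensorProduct.mk K V (TP K V n)).compr₂ (tE K V n).symm.toLinearMap

/-- the empty tensor -/
noncomputable def nil : TP K V 0 := (tE0 K V).symm 1

theorem tE_cons {n : ℕ} (x : V) (w : TP K V n) : tE K V n (cons x w) = x ⊗ₜ w := by
  simp [cons]

theorem tE_symm {n : ℕ} (x : V) (w : TP K V n) : (tE K V n).symm (x ⊗ₜ w) = cons x w := rfl

theorem cons_ext {W : Type*} [AddCommGroup W] [Module K W] {n : ℕ} {f g : TP K V (n + 1) →ₗ[K] W}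
    (h : ∀ x w, f (cons x w) = g (cons x w)) : f = g := by
  have : f ∘ₗ (tE K V n).symm.toLinearMap = g ∘ₗ (tE K V n).symm.toLinearMap :=
    TensorProduct.ext' h
  ext w
  have := LinearMap.congr_fun this (tE K V n w)
  simpa using this

theorem nil_ext {W : Type*} [AddCommGroup W] [Module K W] {f g : TP K V 0 →ₗ[K] W}
    (h : f nil = g nil) : f = g := by
  refine LinearMap.ext fun w => ?_
  have : w = (tE0 K V w) • nil := by
    apply (tE0 K V).injective
    simp [nil]
  rw [this, map_smul, map_smul, h]

variable {V' : Type u} [AddCommGroup V'] [Module K V']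

/-- tensor a map -/
noncomputable def tmap {n m : ℕ} (f : V →ₗ[K] V') (g : TP K V n →ₗ[K] TP K V' m) :
    TP K V (n + 1) →ₗ[K] TP K V' (m + 1) :=
  (tE K V' m).symm.toLinearMap ∘ₗ TensorProduct.map f g ∘ₗ (tE K V n).toLinearMap

@[simp] theorem tmap_cons {n m : ℕ} (f : V →ₗ[K] V') (g : TP K V n →ₗ[K] TP K V' m) (x : V)
    (w : TP K V n) : tmap f g (cons x w) = cons (f x) (g w) := by
  simp [tmap, tE_cons, tE_symm]

/-- the first two factors -/
noncomputable def tE2 (n : ℕ) : TP K V (n + 2) ≃ₗ[K] (V ⊗[K] V) ⊗[K] TP K V n :=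
  (tE K V (n + 1)) ≪≫ₗ TensorProduct.congr (LinearEquiv.refl K V) (tE K V n)
    ≪≫ₗ (TensorProduct.assoc K V V (TP K V n)).symm

theorem tE2_cons {n : ℕ} (x y : V) (w : TP K V n) : tE2 n (cons x (cons y w)) = (x ⊗ₜ y) ⊗ₜ w := by
  simp [tE2, tE_cons]

theorem tE2_symm {n : ℕ} (x y : V) (w : TP K V n) :
    (tE2 n).symm ((x ⊗ₜ y) ⊗ₜ w) = cons x (cons y w) := by
  rw [← tE2_cons, LinearEquiv.symm_apply_apply]

/-- induced map on tensor powers -/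
noncomputable def Xmap (f : V →ₗ[K] V') : (n : ℕ) → TP K V n →ₗ[K] TP K V' n
  | 0 => (tE0 K V').symm.toLinearMap ∘ₗ (tE0 K V).toLinearMap
  | n + 1 => tmap f (Xmap f n)

@[simp] theorem Xmap_nil (f : V →ₗ[K] V') : Xmap f 0 nil = nil := by
  simp [Xmap, nil]

@[simp] theorem Xmap_cons (f : V →ₗ[K] V') (n : ℕ) (x : V) (w : TP K V n) :
    Xmap f (n + 1) (cons x w) = cons (f x) (Xmap f n w) := by
  simp [Xmap]

end tower

/-- Lie superalgebra with grading and differential, on one total space -/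
structure SL (K : Type u) [Field K] (V : Type u) [AddCommGroup V] [Module K V] where
  H : ℤ → Submodule K V
  top : ⨆ i, H i = ⊤
  ε : V →ₗ[K] V
  D : V →ₗ[K] V
  β : V →ₗ[K] V →ₗ[K] V
  eps : ∀ i x, x ∈ H i → ε x = (-1 : K) ^ i • x
  hD : ∀ i x, x ∈ H i → D x ∈ H (i + 1)
  hβ : ∀ i j x y, x ∈ H i → y ∈ H j → β x y ∈ H (i + j)
  DD : ∀ i x, x ∈ H i → D (D x) = 0
  anti : ∀ i j x y, x ∈ H i → y ∈ H j → β y x = -((-1 : K) ^ (i * j) • β x y)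
  jac : ∀ i j k x y z, x ∈ H i → y ∈ H j → z ∈ H k →
    β x (β y z) = β (β x y) z + (-1 : K) ^ (i * j) • β y (β x z)
  leib : ∀ i j x y, x ∈ H i → y ∈ H j → D (β x y) = β (D x) y + (-1 : K) ^ i • β x (D y)

namespace SL
variable {K : Type u} [Field K] {V : Type u} [AddCommGroup V] [Module K V] (S : SL K V)

theorem hext {W : Type*} [AddCommGroup W] [Module K W] {f g : V →ₗ[K] W}
    (h : ∀ i, ∀ x ∈ S.H i, f x = g x) : f = g := by
  have : (⊤ : Submodule K V) ≤ LinearMap.eqLocus f g := by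
    rw [← S.top]
    exact iSup_le fun i x hx => h i x hx
  ext x
  exact this (Submodule.mem_top (x := x))

theorem cext {W : Type*} [AddCommGroup W] [Module K W] {n : ℕ} {f g : TP K V (n + 1) →ₗ[K] W}
    (h : ∀ i, ∀ x ∈ S.H i, ∀ w, f (cons x w) = g (cons x w)) : f = g := by
  have : (cons.compr₂ f : V →ₗ[K] TP K V n →ₗ[K] W) = cons.compr₂ g :=
    S.hext fun i x hx => LinearMap.ext fun w => h i x hx w
  exact cons_ext fun x w => LinearMap.congr_fun (LinearMap.congr_fun this x) w

theorem cext2 {W : Type*} [AddCommGroup W] [Module K W] {n : ℕ} {f g : TP K V (n + 2) →ₗ[K] W}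
    (h : ∀ i j, ∀ x ∈ S.H i, ∀ y ∈ S.H j, ∀ w, f (cons x (cons y w)) = g (cons x (cons y w))) :
    f = g :=
  S.cext fun i x hx => LinearMap.congr_fun (f := f ∘ₗ cons x) (g := g ∘ₗ cons x)
    (S.cext fun j y hy w => h i j x hx y hy w)

theorem cext3 {W : Type*} [AddCommGroup W] [Module K W] {n : ℕ} {f g : TP K V (n + 3) →ₗ[K] W}
    (h : ∀ i j k, ∀ x ∈ S.H i, ∀ y ∈ S.H j, ∀ z ∈ S.H k, ∀ w,
      f (cons x (cons y (cons z w))) = g (cons x (cons y (cons z w)))) :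
    f = g :=
  S.cext fun i x hx => LinearMap.congr_fun (f := f ∘ₗ cons x) (g := g ∘ₗ cons x)
    (S.cext2 fun j k y hy z hz w => h i j k x hx y hy z hz w)

theorem ee (x : V) : S.ε (S.ε x) = x := by
  have : S.ε ∘ₗ S.ε = LinearMap.id := S.hext fun i x hx => by
    simp [S.eps i x hx, smul_smul, ← mul_zpow]
  exact LinearMap.congr_fun this x

theorem DDx (x : V) : S.D (S.D x) = 0 := by
  have : S.D ∘ₗ S.D = 0 := S.hext fun i x hx => S.DD i x hx
  exact LinearMap.congr_fun this x

theorem eD (x : V) : S.ε (S.D x) = - S.D (S.ε x) := by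
  have : S.ε ∘ₗ S.D = - (S.D ∘ₗ S.ε) := S.hext fun i x hx => by
    simp [S.eps i x hx, S.eps _ _ (S.hD i x hx), zpow_add₀]
  exact LinearMap.congr_fun this x

/-- the super swap -/
noncomputable def tau : V ⊗[K] V →ₗ[K] V ⊗[K] V :=
  (1 / 2 : K) • ((TensorProduct.map LinearMap.id LinearMap.id + TensorProduct.map S.ε LinearMap.id
    + TensorProduct.map LinearMap.id S.ε - TensorProduct.map S.ε S.ε) ∘ₗ
    (TensorProduct.comm K V V).toLinearMap)

theorem tau_hom [CharZero K] {i j : ℤ} {x y : V} (hx : x ∈ S.H i) (hy : y ∈ S.H j) :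
    S.tau (x ⊗ₜ y) = (-1 : K) ^ (i * j) • (y ⊗ₜ x) := by
  simp only [tau, LinearMap.smul_apply, LinearMap.comp_apply, LinearMap.add_apply, LinearMap.sub_apply,
    LinearEquiv.coe_coe, TensorProduct.comm_tmul, TensorProduct.map_tmul, LinearMap.id_apply,
    S.eps i x hx, S.eps j y hy, ← TensorProduct.smul_tmul', TensorProduct.tmul_smul, smul_smul]
  rw [zpow_mul]
  rcases Int.even_or_odd i with hi | hi <;> rcases Int.even_or_odd j with hj | hj <;>
    simp only [hi.neg_one_zpow, hj.neg_one_zpow, one_zpow] <;> module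

/-- swap of the first two factors -/
noncomputable def sfront (n : ℕ) : TP K V (n + 2) →ₗ[K] TP K V (n + 2) :=
  (tE2 n).symm.toLinearMap ∘ₗ TensorProduct.map S.tau LinearMap.id ∘ₗ (tE2 n).toLinearMap

/-- bracket of the first two factors -/
noncomputable def hfront (n : ℕ) : TP K V (n + 2) →ₗ[K] TP K V (n + 1) :=
  (tE K V n).symm.toLinearMap ∘ₗ TensorProduct.map (TensorProduct.lift S.β) LinearMap.id ∘ₗ
    (tE2 n).toLinearMap

theorem sfront_cons [CharZero K] (n : ℕ) {i j : ℤ} {x y : V} (hx : x ∈ S.H i) (hy : y ∈ S.H j)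
    (w : TP K V n) :
    S.sfront n (cons x (cons y w)) = (-1 : K) ^ (i * j) • cons y (cons x w) := by
  simp [sfront, tE2_cons, S.tau_hom hx hy, ← TensorProduct.smul_tmul', tE2_symm]

theorem hfront_cons (n : ℕ) (x y : V) (w : TP K V n) :
    S.hfront n (cons x (cons y w)) = cons (S.β x y) w := by
  simp [hfront, tE2_cons, tE_symm]

/-- adjacent transpositions -/
noncomputable def s : (n : ℕ) → ℕ → (TP K V n →ₗ[K] TP K V n)
  | 0, _ => LinearMap.id
  | 1, _ => LinearMap.id
  | n + 2, 0 => S.sfront n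
  | n + 2, i + 1 => tmap LinearMap.id (s (n + 1) i)

/-- adjacent brackets -/
noncomputable def h : (n : ℕ) → ℕ → (TP K V (n + 1) →ₗ[K] TP K V n)
  | 0, _ => 0
  | n + 1, 0 => S.hfront n
  | n + 1, i + 1 => tmap LinearMap.id (h n i)

@[simp] theorem s_succ (n i : ℕ) (x : V) (w : TP K V n) :
    S.s (n + 1) (i + 1) (cons x w) = cons x (S.s n i w) := by
  cases n <;> simp [s]

theorem s_succ_eq (n i : ℕ) : S.s (n + 1) (i + 1) = tmap LinearMap.id (S.s n i) :=
  cons_ext fun x w => by simp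

@[simp] theorem h_succ (n i : ℕ) (x : V) (w : TP K V (n + 1)) :
    S.h (n + 1) (i + 1) (cons x w) = cons x (S.h n i w) := by
  simp [h]

@[simp] theorem h_zero (n : ℕ) (x y : V) (w : TP K V n) :
    S.h (n + 1) 0 (cons x (cons y w)) = cons (S.β x y) w := S.hfront_cons n x y w

theorem s_zero [CharZero K] (n : ℕ) {i j : ℤ} {x y : V} (hx : x ∈ S.H i) (hy : y ∈ S.H j)
    (w : TP K V n) :
    S.s (n + 2) 0 (cons x (cons y w)) = (-1 : K) ^ (i * j) • cons y (cons x w) :=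
  S.sfront_cons n hx hy w

variable [CharZero K]

theorem sgn_sq (i j : ℤ) : (-1 : K) ^ (i * j) * (-1 : K) ^ (j * i) = 1 := by
  rw [mul_comm j i, ← mul_zpow]; simp

theorem s_sq (n i : ℕ) (w : TP K V n) : S.s n i (S.s n i w) = w := by
  suffices h : S.s n i ∘ₗ S.s n i = LinearMap.id from LinearMap.congr_fun h w
  induction i generalizing n with
  | zero =>
    match n with
    | 0 => rfl
    | 1 => rfl
    | n + 2 =>
      refine S.cext2 fun i j x hx y hy w => ?_
      simp [S.s_zero n hx hy, S.s_zero n hy hx, smul_smul, sgn_sq]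
  | succ i ih =>
    match n with
    | 0 => rfl
    | n + 1 =>
      refine cons_ext fun x w => ?_
      have := LinearMap.congr_fun (ih n w) w
      simp at this
      simp [this]

theorem h_s (n i : ℕ) (w : TP K V (n + 1)) : S.h n i (S.s (n + 1) i w) = - S.h n i w := by
  suffices h : S.h n i ∘ₗ S.s (n + 1) i = - S.h n i from LinearMap.congr_fun h w
  induction i generalizing n with
  | zero =>
    match n with
    | 0 => simp [h]
    | n + 1 =>
      refine S.cext2 fun i j x hx y hy w => ?_
      simp [S.s_zero n hx hy, S.anti i j x y hx hy, smul_smul, ← mul_zpow]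
  | succ i ih =>
    match n with
    | 0 => simp [h]
    | n + 1 =>
      refine cons_ext fun x w => ?_
      have := LinearMap.congr_fun (ih n w) w
      simp at this
      simp [this]

theorem s_comm (n i j : ℕ) (hij : i + 2 ≤ j) (w : TP K V n) :
    S.s n i (S.s n j w) = S.s n j (S.s n i w) := by
  suffices h : S.s n i ∘ₗ S.s n j = S.s n j ∘ₗ S.s n i from LinearMap.congr_fun h w
  induction i generalizing n j with
  | zero =>
    obtain ⟨j, rfl⟩ := Nat.exists_eq_add_of_le' hij
    match n with
    | 0 => rfl
    | 1 => rfl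
    | n + 2 =>
      refine S.cext2 fun i j x hx y hy w => ?_
      simp [S.s_zero n hx hy]
  | succ i ih =>
    obtain ⟨j, rfl⟩ := Nat.exists_eq_add_of_le' (show 1 ≤ j by omega)
    match n with
    | 0 => rfl
    | n + 1 =>
      refine cons_ext fun x w => ?_
      have := LinearMap.congr_fun (ih n j (by omega) w) w
      simp at this
      simp [this]

theorem h_s_low (n i j : ℕ) (hij : i + 2 ≤ j) (w : TP K V (n + 1)) :
    S.h n j (S.s (n + 1) i w) = S.s n i (S.h n j w) := by
  suffices h : S.h n j ∘ₗ S.s (n + 1) i = S.s n i ∘ₗ S.h n j from LinearMap.congr_fun h w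
  induction i generalizing n j with
  | zero =>
    obtain ⟨j, rfl⟩ := Nat.exists_eq_add_of_le' hij
    match n with
    | 0 => simp [h]
    | 1 => simp [h, tmap]
    | n + 2 =>
      refine S.cext2 fun i j x hx y hy w => ?_
      simp [S.s_zero _ hx hy]
  | succ i ih =>
    obtain ⟨j, rfl⟩ := Nat.exists_eq_add_of_le' (show 1 ≤ j by omega)
    match n with
    | 0 => simp [h]
    | n + 1 =>
      refine cons_ext fun x w => ?_
      have := LinearMap.congr_fun (ih n j (by omega) w) w
      simp at this
      simp [this]

theorem h_s_high (n i j : ℕ) (hij : i + 1 ≤ j) (w : TP K V (n + 1)) :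
    S.h n i (S.s (n + 1) (j + 1) w) = S.s n j (S.h n i w) := by
  suffices h : S.h n i ∘ₗ S.s (n + 1) (j + 1) = S.s n j ∘ₗ S.h n i from LinearMap.congr_fun h w
  induction i generalizing n j with
  | zero =>
    obtain ⟨j, rfl⟩ := Nat.exists_eq_add_of_le' hij
    match n with
    | 0 => simp [h]
    | n + 1 =>
      refine S.cext2 fun i j x hx y hy w => ?_
      simp
  | succ i ih =>
    obtain ⟨j, rfl⟩ := Nat.exists_eq_add_of_le' (show 1 ≤ j by omega)
    match n with
    | 0 => simp [h]
    | n + 1 =>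
      refine cons_ext fun x w => ?_
      have := LinearMap.congr_fun (ih n j (by omega) w) w
      simp at this
      simp [this]

theorem h_h (n i j : ℕ) (hij : i + 1 ≤ j) (w : TP K V (n + 2)) :
    S.h n i (S.h (n + 1) (j + 1) w) = S.h n j (S.h (n + 1) i w) := by
  suffices h : S.h n i ∘ₗ S.h (n + 1) (j + 1) = S.h n j ∘ₗ S.h (n + 1) i from LinearMap.congr_fun h w
  induction i generalizing n j with
  | zero =>
    obtain ⟨j, rfl⟩ := Nat.exists_eq_add_of_le' hij
    match n with
    | 0 => simp [h]
    | n + 1 =>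
      refine S.cext2 fun i j x hx y hy w => ?_
      simp
  | succ i ih =>
    obtain ⟨j, rfl⟩ := Nat.exists_eq_add_of_le' (show 1 ≤ j by omega)
    match n with
    | 0 => simp [h]
    | n + 1 =>
      refine cons_ext fun x w => ?_
      have := LinearMap.congr_fun (ih n j (by omega) w) w
      simp at this
      simp [this]

theorem s_braid (n i : ℕ) (hi : i + 3 ≤ n) (w : TP K V n) :
    S.s n i (S.s n (i + 1) (S.s n i w)) = S.s n (i + 1) (S.s n i (S.s n (i + 1) w)) := by
  suffices h : S.s n i ∘ₗ S.s n (i + 1) ∘ₗ S.s n i = S.s n (i + 1) ∘ₗ S.s n i ∘ₗ S.s n (i + 1) from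
    LinearMap.congr_fun h w
  induction i generalizing n with
  | zero =>
    obtain ⟨n, rfl⟩ := Nat.exists_eq_add_of_le' hi
    refine S.cext3 fun i j k x hx y hy z hz w => ?_
    simp [S.s_zero _ hx hy, S.s_zero _ hx hz, S.s_zero _ hy hz, smul_smul]
    congr 1; ring
  | succ i ih =>
    obtain ⟨n, rfl⟩ := Nat.exists_eq_add_of_le' (show 1 ≤ n by omega)
    refine cons_ext fun x w => ?_
    have := LinearMap.congr_fun (ih n (by omega) w) w
    simp at this
    simp [this]

theorem h_braid (n i : ℕ) (hi : i + 2 ≤ n) (w : TP K V (n + 1)) :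
    S.h n (i + 1) (S.s (n + 1) i (S.s (n + 1) (i + 1) w)) = S.s n i (S.h n i w) := by
  suffices h : S.h n (i + 1) ∘ₗ S.s (n + 1) i ∘ₗ S.s (n + 1) (i + 1) = S.s n i ∘ₗ S.h n i from
    LinearMap.congr_fun h w
  induction i generalizing n with
  | zero =>
    obtain ⟨n, rfl⟩ := Nat.exists_eq_add_of_le' hi
    refine S.cext3 fun i j k x hx y hy z hz w => ?_
    simp [S.s_zero _ hx hz, S.s_zero _ hy hz, S.s_zero _ (S.hβ _ _ _ _ hx hy) hz, smul_smul]
    rw [← zpow_add₀ (by simp)]; congr 2; ring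
  | succ i ih =>
    obtain ⟨n, rfl⟩ := Nat.exists_eq_add_of_le' (show 1 ≤ n by omega)
    refine cons_ext fun x w => ?_
    have := LinearMap.congr_fun (ih n (by omega) w) w
    simp at this
    simp [this]

theorem h_jac (n i : ℕ) (w : TP K V (n + 2)) :
    S.h n i (S.h (n + 1) i (w - S.s (n + 2) (i + 1) w + S.s (n + 2) (i + 1) (S.s (n + 2) i w))) = 0 := by
  suffices h : S.h n i ∘ₗ S.h (n + 1) i ∘ₗ (LinearMap.id - S.s (n + 2) (i + 1) +
      S.s (n + 2) (i + 1) ∘ₗ S.s (n + 2) i) = 0 from LinearMap.congr_fun h w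
  induction i generalizing n with
  | zero =>
    match n with
    | 0 => simp [h]
    | n + 1 =>
    refine S.cext3 fun i j k x hx y hy z hz w => ?_
    simp [S.s_zero _ hx hz, S.s_zero _ hy hz, S.s_zero _ hx hy, smul_smul]
    simp only [← LinearMap.map_smul₂, ← LinearMap.map_sub₂, ← LinearMap.map_add₂]
    have h1 := S.jac i j k x y z hx hy hz
    have h2 := S.anti _ _ _ _ (S.hβ _ _ _ _ hx hz) hy
    have h3 := S.anti _ _ _ _ (S.hβ _ _ _ _ hy hz) hx
    rw [h2, h3] at h1
    have e1 : (-1 : K) ^ (i * j) * (-1 : K) ^ (i * k) = (-1 : K) ^ ((j + k) * i) := by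
      rw [← zpow_add₀ (by simp)]; congr 1; ring
    have e2 : (-1 : K) ^ (i * j) * (-1 : K) ^ ((i + k) * j) = (-1 : K) ^ (j * k) := by
      rw [← zpow_add₀ (by simp)]
      rw [show i * j + (i + k) * j = (2 * (i * j)) + j * k by ring, zpow_add₀ (by simp), zpow_mul]
      simp
    rw [smul_neg, smul_smul, e2] at h1
    rw [e1]
    have h4 : (S.β ((S.β x) y)) z - (S.β ((S.β ((-1 : K) ^ (j * k) • x)) z)) y +
          (S.β ((S.β ((-1 : K) ^ ((j + k) * i) • y)) z)) x = 0 := by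
      simp only [map_smul, LinearMap.smul_apply]
      rw [sub_eq_add_neg, ← h1]; abel
    rw [h4]; simp
  | succ i ih =>
    match n with
    | 0 => simp [h]
    | n + 1 =>
    refine cons_ext fun x w => ?_
    have := LinearMap.congr_fun (ih n w) w
    simp only [LinearMap.comp_apply, LinearMap.add_apply, LinearMap.sub_apply, LinearMap.id_apply, LinearMap.zero_apply] at this
    simp only [LinearMap.comp_apply, LinearMap.add_apply, LinearMap.sub_apply, LinearMap.id_apply, LinearMap.zero_apply, s_succ, ← map_add, ← map_sub, h_succ, this, map_zero]

end SL
end PBWProof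

namespace PBWProof

/-- total tensor space -/
abbrev MM (K : Type u) [Field K] (V : Type u) [AddCommGroup V] [Module K V] : Type u :=
  DirectSum ℕ (TP K V)

section
variable {K : Type u} [Field K] {V : Type u} [AddCommGroup V] [Module K V]

/-- inclusion -/
noncomputable def inc (n : ℕ) : TP K V n →ₗ[K] MM K V := DirectSum.lof K ℕ (TP K V) n

/-- prepend on the total space -/
noncomputable def consM : V →ₗ[K] MM K V →ₗ[K] MM K V :=
  (DirectSum.toModule K ℕ (V →ₗ[K] MM K V) (fun n => (cons.compr₂ (inc (n + 1))).flip)).flip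

@[simp] theorem consM_inc (n : ℕ) (x : V) (w : TP K V n) :
    consM x (inc n w) = inc (n + 1) (cons x w) := by
  simp [consM, inc]

theorem inc_ext {W : Type*} [AddCommGroup W] [Module K W] {f g : MM K V →ₗ[K] W}
    (h : ∀ n w, f (inc n w) = g (inc n w)) : f = g :=
  DirectSum.linearMap_ext K fun n => LinearMap.ext (h n)

end

namespace SL
variable {K : Type u} [Field K] {V : Type u} [AddCommGroup V] [Module K V] (S : SL K V)

/-- affine transpositions -/
noncomputable def shat (n : ℕ) (φ : TP K V n →ₗ[K] MM K V) (i : ℕ) :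
    Module.End K (TP K V (n + 1) × MM K V) :=
  LinearMap.prod (S.s (n + 1) i ∘ₗ LinearMap.fst K _ _)
    (LinearMap.snd K _ _ + φ ∘ₗ S.h n i ∘ₗ LinearMap.fst K _ _)

@[simp] theorem shat_apply (n : ℕ) (φ : TP K V n →ₗ[K] MM K V) (i : ℕ) (w : TP K V (n + 1)) (m : MM K V) :
    S.shat n φ i (w, m) = (S.s (n + 1) i w, m + φ (S.h n i w)) := rfl

/-- the PBW projection -/
noncomputable def P : (n : ℕ) → TP K V n →ₗ[K] MM K V
  | 0 => inc 0
  | n + 1 => (inc (n + 1)).coprod LinearMap.id ∘ₗ Qsym (S.shat n (P n)) n ∘ₗ LinearMap.inl K _ _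

theorem P_succ (n : ℕ) (w : TP K V (n + 1)) : S.P (n + 1) w =
    (inc (n + 1)).coprod LinearMap.id (Qsym (S.shat n (S.P n)) n (w, 0)) := rfl

variable [CharZero K]

theorem cox (m : ℕ) (φ : TP K V (m + 1) →ₗ[K] MM K V) (ψ : TP K V m →ₗ[K] MM K V)
    (hr : ∀ i, i < m → ∀ w, φ w = φ (S.s (m + 1) i w) + ψ (S.h m i w)) :
    Cox (S.shat (m + 1) φ) (m + 1) := by
  refine ⟨?_, ?_, ?_⟩
  · intro i hi
    refine LinearMap.ext fun ⟨w, a⟩ => ?_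
    simp [S.s_sq, S.h_s]
  · intro i j hij hj
    obtain ⟨j, rfl⟩ := Nat.exists_eq_add_of_le' (show 1 ≤ j by omega)
    refine LinearMap.ext fun ⟨w, a⟩ => ?_
    simp only [Module.End.mul_apply, shat_apply, Prod.mk.injEq]
    refine ⟨S.s_comm _ _ _ hij w, ?_⟩
    rw [S.h_s_low _ _ _ hij, S.h_s_high _ _ _ (by omega), hr i (by omega) (S.h (m+1) (j+1) w),
      hr j (by omega) (S.h (m+1) i w), S.h_h _ _ _ (by omega)]
    abel
  · intro i hi
    refine LinearMap.ext fun ⟨w, a⟩ => ?_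
    simp only [Module.End.mul_apply, shat_apply, Prod.mk.injEq]
    refine ⟨S.s_braid _ _ (by omega) w, ?_⟩
    have e1 := hr i (by omega) (S.h (m+1) i w)
    have e2 := hr i (by omega) (S.h (m+1) i (S.s (m+2) (i+1) w))
    have e3 := hr i (by omega) (S.h (m+1) i (S.s (m+2) (i+1) (S.s (m+2) i w)))
    rw [← S.h_braid _ _ (by omega)] at e1 e2 e3
    rw [S.s_sq] at e2 e3
    rw [S.s_sq] at e3
    have e4 := congrArg ψ (S.h_jac m i w)
    simp only [map_add, map_sub, map_zero] at e4
    rw [e1, e3, e2, ← sub_eq_zero, ← e4]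
    abel

theorem Q_zero (n : ℕ) (φ : TP K V n →ₗ[K] MM K V) (m k : _) :
    Qsym (S.shat n φ) k (0, m) = (0, m) := by
  have := Qsym_inter (fun _ => 1) (S.shat n φ) (LinearMap.inr K _ _) k (fun i _ x => by simp) m
  rw [Qsym_one] at this
  exact this.symm

theorem P_rel (n : ℕ) : ∀ i, i < n → ∀ w, S.P (n + 1) w =
    S.P (n + 1) (S.s (n + 1) i w) + S.P n (S.h n i w) := by
  induction n with
  | zero => intro i hi; omega
  | succ m ih =>
    intro i hi w
    have hc := S.cox m (S.P (m + 1)) (S.P m) ih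
    have := LinearMap.congr_fun (Qsym_absorb (m + 1) hc i hi) (w, 0)
    rw [Module.End.mul_apply, shat_apply, zero_add] at this
    rw [S.P_succ (m + 1) w, ← this, S.P_succ (m + 1) (S.s (m + 1 + 1) i w)]
    generalize S.P (m + 1) (S.h (m + 1) i w) = v
    rw [show (S.s (m + 1 + 1) i w, v) =
      (S.s (m + 1 + 1) i w, 0) + (0, v) by simp, map_add, map_add, Q_zero]
    simp

theorem P_mod {W : Type u} [AddCommGroup W] [Module K W] (π : MM K V →ₗ[K] W)
    (hπ : ∀ n i, i < n → ∀ w : TP K V (n + 1), π (inc (n + 1) w) =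
      π (inc (n + 1) (S.s (n + 1) i w)) + π (inc n (S.h n i w))) (n : ℕ) (w : TP K V n) :
    π (S.P n w) = π (inc n w) := by
  induction n with
  | zero => rfl
  | succ n ih =>
    rw [P_succ]
    have := Qsym_inter (S.shat n (S.P n)) (fun _ => 1) (π ∘ₗ (inc (n + 1)).coprod LinearMap.id) n
      (fun i hi ⟨w, m⟩ => by
        simp only [shat_apply, LinearMap.comp_apply, LinearMap.coprod_apply, map_add, LinearMap.id_apply, Module.End.one_apply]
        rw [ih, hπ n i hi w]; abel) (w, 0)
    rw [Qsym_one] at this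
    simpa using this

theorem P_nat {V' : Type u} [AddCommGroup V'] [Module K V'] (S' : SL K V')
    (X : ∀ n, TP K V n →ₗ[K] TP K V' n) (XM : MM K V →ₗ[K] MM K V')
    (h1 : ∀ n w, XM (inc n w) = inc n (X n w))
    (h2 : ∀ n i w, X n (S.s n i w) = S'.s n i (X n w))
    (h3 : ∀ n i w, X n (S.h n i w) = S'.h n i (X (n + 1) w)) (n : ℕ) (w : TP K V n) :
    XM (S.P n w) = S'.P n (X n w) := by
  induction n with
  | zero => exact h1 0 w
  | succ n ih =>
    rw [P_succ, P_succ]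
    have := Qsym_inter (S.shat n (S.P n)) (S'.shat n (S'.P n)) (LinearMap.prodMap (X (n + 1)) XM) n
      (fun i hi ⟨w, m⟩ => by simp [h2, h3, ih]) (w, 0)
    simp only [LinearMap.prodMap_apply, map_zero] at this
    rw [← this]
    simp [h1]

/-- the PBW projection on the total space -/
noncomputable def Pt : MM K V →ₗ[K] MM K V := DirectSum.toModule K ℕ _ S.P


@[simp] theorem Pt_inc (n : ℕ) (w : TP K V n) : S.Pt (inc n w) = S.P n w := by
  simp [Pt, inc]

theorem Pt_cons (x : V) (m : MM K V) : S.Pt (consM x (S.Pt m)) = S.Pt (consM x m) := by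
  suffices h : S.Pt ∘ₗ consM x ∘ₗ S.Pt = S.Pt ∘ₗ consM x from LinearMap.congr_fun h m
  refine inc_ext fun n w => ?_
  simp only [LinearMap.comp_apply, Pt_inc]
  refine S.P_mod (S.Pt ∘ₗ consM x) (fun n i hi w => ?_) n w
  have := S.P_rel (n + 1) (i + 1) (by omega) (cons x w)
  simpa using this

/-- differential on tensor powers -/
noncomputable def Dn : (n : ℕ) → TP K V n →ₗ[K] TP K V n
  | 0 => 0
  | n + 1 => tmap S.D LinearMap.id + tmap S.ε (Dn n)


@[simp] theorem Dn_cons (n : ℕ) (x : V) (w : TP K V n) :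
    S.Dn (n + 1) (cons x w) = cons (S.D x) w + cons (S.ε x) (S.Dn n w) := by
  simp [Dn]

theorem Dn_s (n i : ℕ) (w : TP K V n) : S.Dn n (S.s n i w) = S.s n i (S.Dn n w) := by
  suffices h : S.Dn n ∘ₗ S.s n i = S.s n i ∘ₗ S.Dn n from LinearMap.congr_fun h w
  induction i generalizing n with
  | zero =>
    match n with
    | 0 => rfl
    | 1 => rfl
    | n + 2 =>
      refine S.cext2 fun i j x hx y hy w => ?_
      have h1 := S.hD _ _ hx
      have h2 := S.hD _ _ hy
      simp [S.s_zero n hx hy, S.s_zero n h1 hy, S.s_zero n hx h2, S.eps _ _ hx, S.eps _ _ hy, smul_smul]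
      have a1 : (-1 : K) ^ ((i + 1) * j) = (-1) ^ (i * j) * (-1) ^ j := by
        rw [← zpow_add₀ (by simp)]; congr 1; ring
      have a2 : (-1 : K) ^ i * (-1 : K) ^ (i * (j + 1)) = (-1) ^ (i * j) := by
        rw [← zpow_add₀ (by simp), show i + i * (j + 1) = 2 * i + i * j by ring, zpow_add₀ (by simp),
          zpow_mul]
        simp
      rw [a1, a2]
      module
  | succ i ih =>
    match n with
    | 0 => rfl
    | n + 1 =>
      refine cons_ext fun x w => ?_
      have := LinearMap.congr_fun (ih n w) w
      simp at this
      simp [this]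


theorem Dn_h (n i : ℕ) (w : TP K V (n + 1)) : S.Dn n (S.h n i w) = S.h n i (S.Dn (n + 1) w) := by
  suffices h : S.Dn n ∘ₗ S.h n i = S.h n i ∘ₗ S.Dn (n + 1) from LinearMap.congr_fun h w
  induction i generalizing n with
  | zero =>
    match n with
    | 0 => simp [h]
    | n + 1 =>
      refine S.cext2 fun i j x hx y hy w => ?_
      have h3 := S.hβ _ _ _ _ hx hy
      simp [S.eps _ _ hx, S.eps _ _ hy, S.eps _ _ h3, S.leib i j x y hx hy, smul_smul, zpow_add₀]
      abel
  | succ i ih =>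
    match n with
    | 0 => simp [h]
    | n + 1 =>
      refine cons_ext fun x w => ?_
      have := LinearMap.congr_fun (ih n w) w
      simp at this
      simp [this]

/-- differential on the total space -/
noncomputable def DM : MM K V →ₗ[K] MM K V :=
  DirectSum.toModule K ℕ _ (fun n => inc n ∘ₗ S.Dn n)


@[simp] theorem DM_inc (n : ℕ) (w : TP K V n) : S.DM (inc n w) = inc n (S.Dn n w) := by
  simp [DM, inc]

theorem DM_Pt (m : MM K V) : S.DM (S.Pt m) = S.Pt (S.DM m) := by
  suffices h : S.DM ∘ₗ S.Pt = S.Pt ∘ₗ S.DM from LinearMap.congr_fun h m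
  refine inc_ext fun n w => ?_
  simp only [LinearMap.comp_apply, Pt_inc, DM_inc]
  exact S.P_nat S S.Dn S.DM (S.DM_inc) S.Dn_s S.Dn_h n w

end SL

section functorial
variable {K : Type u} [Field K] {V V' : Type u} [AddCommGroup V] [Module K V]
  [AddCommGroup V'] [Module K V'] 

/-- induced map on the total space -/
noncomputable def XM (f : V →ₗ[K] V') : MM K V →ₗ[K] MM K V' :=
  DirectSum.toModule K ℕ _ (fun n => inc n ∘ₗ Xmap f n)

@[simp] theorem XM_inc (f : V →ₗ[K] V') (n : ℕ) (w : TP K V n) : XM f (inc n w) = inc n (Xmap f n w) := by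
  simp [XM, inc]

/-- morphisms -/
structure SLHom (S : SL K V) (S' : SL K V') (f : V →ₗ[K] V') : Prop where
  H : ∀ i x, x ∈ S.H i → f x ∈ S'.H i
  D : ∀ x, f (S.D x) = S'.D (f x)
  β : ∀ x y, f (S.β x y) = S'.β (f x) (f y)

variable {S : SL K V} {S' : SL K V'} {f : V →ₗ[K] V'}

theorem SLHom.ε (hf : SLHom S S' f) (x : V) : f (S.ε x) = S'.ε (f x) := by
  have : f ∘ₗ S.ε = S'.ε ∘ₗ f := S.hext fun i x hx => by
    simp [S.eps i x hx, S'.eps i _ (hf.H i x hx)]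
  exact LinearMap.congr_fun this x

theorem SLHom.Xs [CharZero K] (hf : SLHom S S' f) (n i : ℕ) (w : TP K V n) : Xmap f n (S.s n i w) = S'.s n i (Xmap f n w) := by
  suffices h : Xmap f n ∘ₗ S.s n i = S'.s n i ∘ₗ Xmap f n from LinearMap.congr_fun h w
  induction i generalizing n with
  | zero =>
    match n with
    | 0 => rfl
    | 1 => rfl
    | n + 2 =>
      refine S.cext2 fun i j x hx y hy w => ?_
      simp [S.s_zero n hx hy, S'.s_zero n (hf.H _ _ hx) (hf.H _ _ hy)]
  | succ i ih =>
    match n with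
    | 0 => rfl
    | n + 1 =>
      refine cons_ext fun x w => ?_
      have := LinearMap.congr_fun (ih n w) w
      simp at this
      simp [this]

theorem SLHom.Xh (hf : SLHom S S' f) (n i : ℕ) (w : TP K V (n + 1)) : Xmap f n (S.h n i w) = S'.h n i (Xmap f (n + 1) w) := by
  suffices h : Xmap f n ∘ₗ S.h n i = S'.h n i ∘ₗ Xmap f (n + 1) from LinearMap.congr_fun h w
  induction i generalizing n with
  | zero =>
    match n with
    | 0 => simp [SL.h]
    | n + 1 =>
      refine S.cext2 fun i j x hx y hy w => ?_
      simp [hf.β]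
  | succ i ih =>
    match n with
    | 0 => simp [SL.h]
    | n + 1 =>
      refine cons_ext fun x w => ?_
      have := LinearMap.congr_fun (ih n w) w
      simp at this
      simp [this]

theorem SLHom.XP [CharZero K] (hf : SLHom S S' f) (m : MM K V) : XM f (S.Pt m) = S'.Pt (XM f m) := by
  suffices h : XM f ∘ₗ S.Pt = S'.Pt ∘ₗ XM f from LinearMap.congr_fun h m
  refine inc_ext fun n w => ?_
  simp only [LinearMap.comp_apply, SL.Pt_inc, XM_inc]
  exact S.P_nat S' (Xmap f) (XM f) (XM_inc f) hf.Xs hf.Xh n w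

theorem SLHom.XDn [CharZero K] (hf : SLHom S S' f) (n : ℕ) (w : TP K V n) : Xmap f n (S.Dn n w) = S'.Dn n (Xmap f n w) := by
  suffices h : Xmap f n ∘ₗ S.Dn n = S'.Dn n ∘ₗ Xmap f n from LinearMap.congr_fun h w
  induction n with
  | zero => simp [SL.Dn]
  | succ n ih =>
    refine cons_ext fun x w => ?_
    have := LinearMap.congr_fun (ih w) w
    simp at this
    simp [this, hf.D, hf.ε]

theorem SLHom.he [CharZero K] (hf : SLHom S S' f) (hq : QI S.D S'.D f) (n : ℕ) :
    HE (Xmap S.ε n) (S.Dn n) (Xmap S'.ε n) (S'.Dn n) (Xmap f n) := by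
  have h1 := he_of_qi S.ε S.D S'.ε S'.D f S.DDx S'.DDx hf.D hf.ε S.ee S'.ee S.eD S'.eD hq
  have hXe : ∀ n w, Xmap f n (Xmap S.ε n w) = Xmap S'.ε n (Xmap f n w) := by
    intro n w
    suffices h : Xmap f n ∘ₗ Xmap S.ε n = Xmap S'.ε n ∘ₗ Xmap f n from LinearMap.congr_fun h w
    induction n with
    | zero => exact nil_ext (by simp)
    | succ n ih =>
      refine cons_ext fun x w => ?_
      have := LinearMap.congr_fun (ih w) w
      simp at this
      simp [this, hf.ε]
  induction n with
  | zero =>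
    refine ⟨(tE0 K V).symm.toLinearMap ∘ₗ (tE0 K V').toLinearMap, 0, 0, ?_, ?_, ?_, ?_, ?_, ?_⟩ <;>
      simp [SL.Dn, Xmap]
  | succ n ih =>
    obtain ⟨g, k, k', a1, a2, a3, a4, a5, a6⟩ := he_tensor S.ε S.D S'.ε S'.D f _ _ _ _ _ S.ee S'.ee S.eD S'.eD
      (hf.XDn n) (hXe n) h1 ih
    have b1 : ∀ w, S.Dn (n + 1) w = (tE K V n).symm ((TensorProduct.map S.D LinearMap.id +
      TensorProduct.map S.ε (S.Dn n) : V ⊗[K] TP K V n →ₗ[K] V ⊗[K] TP K V n) (tE K V n w)) := fun w => rfl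
    have b2 : ∀ w, S'.Dn (n + 1) w = (tE K V' n).symm ((TensorProduct.map S'.D LinearMap.id +
      TensorProduct.map S'.ε (S'.Dn n) : V' ⊗[K] TP K V' n →ₗ[K] V' ⊗[K] TP K V' n) (tE K V' n w)) := fun w => rfl
    have b3 : ∀ w, Xmap S.ε (n + 1) w = (tE K V n).symm (
      TensorProduct.map S.ε (Xmap S.ε n) (tE K V n w)) := fun w => rfl
    have b4 : ∀ w, Xmap S'.ε (n + 1) w = (tE K V' n).symm (
      TensorProduct.map S'.ε (Xmap S'.ε n) (tE K V' n w)) := fun w => rfl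
    have b5 : ∀ w, Xmap f (n + 1) w = (tE K V' n).symm (
      TensorProduct.map f (Xmap f n) (tE K V n w)) := fun w => rfl
    refine ⟨(tE K V n).symm.toLinearMap ∘ₗ g ∘ₗ (tE K V' n).toLinearMap,
      (tE K V n).symm.toLinearMap ∘ₗ k ∘ₗ (tE K V n).toLinearMap,
      (tE K V' n).symm.toLinearMap ∘ₗ k' ∘ₗ (tE K V' n).toLinearMap, ?_, ?_, ?_, ?_, ?_, ?_⟩
    all_goals
      intro x
      simp only [b1, b2, b3, b4, b5, LinearMap.comp_apply, LinearEquiv.coe_coe, LinearEquiv.apply_symm_apply,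
        a1, a2, a3, a4, a5, a6, map_add, map_neg, LinearEquiv.symm_apply_apply]

theorem SLHom.qiM [CharZero K] (hf : SLHom S S' f) (hq : QI S.D S'.D f) : QI S.DM S'.DM (XM f) := by
  choose g k k' a1 a2 a3 a4 a5 a6 using hf.he hq
  obtain ⟨G, hg⟩ : ∃ G : MM K V' →ₗ[K] MM K V, ∀ n w, G (inc n w) = inc n (g n w) :=
    ⟨DirectSum.toModule K ℕ (MM K V) (fun n => inc n ∘ₗ g n), by simp [inc]⟩
  obtain ⟨G1, hk⟩ : ∃ G : MM K V →ₗ[K] MM K V, ∀ n w, G (inc n w) = inc n (k n w) :=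
    ⟨DirectSum.toModule K ℕ (MM K V) (fun n => inc n ∘ₗ k n), by simp [inc]⟩
  obtain ⟨G2, hk'⟩ : ∃ G : MM K V' →ₗ[K] MM K V', ∀ n w, G (inc n w) = inc n (k' n w) :=
    ⟨DirectSum.toModule K ℕ (MM K V') (fun n => inc n ∘ₗ k' n), by simp [inc]⟩
  refine qi_of_he 0 _ 0 _ _ ⟨G, G1, G2, ?_, by simp, by simp, by simp, ?_, ?_⟩
  · intro y
    induction y using DirectSum.induction_on with
    | zero => simp
    | of n w =>
      change G (S'.DM (inc n w)) = S.DM (G (inc n w))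
      rw [SL.DM_inc, hg, hg, SL.DM_inc, a1]
    | add a b ha hb => simp only [map_add, ha, hb]
  · intro y
    induction y using DirectSum.induction_on with
    | zero => simp
    | of n w =>
      change G (XM f (inc n w)) = inc n w + S.DM (G1 (inc n w)) + G1 (S.DM (inc n w))
      rw [SL.DM_inc, XM_inc, hg, hk, hk, SL.DM_inc, a5, map_add, map_add]
    | add a b ha hb => simp only [map_add, ha, hb]; abel
  · intro y
    induction y using DirectSum.induction_on with
    | zero => simp
    | of n w =>
      change XM f (G (inc n w)) = inc n w + S'.DM (G2 (inc n w)) + G2 (S'.DM (inc n w))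
      rw [SL.DM_inc, hg, XM_inc, hk', hk', SL.DM_inc, a6, map_add, map_add]
    | add a b ha hb => simp only [map_add, ha, hb]; abel

end functorial
end PBWProof

namespace PBWProof

section totals
variable {K : Type u} [Field K]

/-- total space of a graded family -/
abbrev Tot (C : ℤ → Type u) [∀ i, AddCommGroup (C i)] : Type u := DirectSum ℤ C

section
variable (K)
variable {C : ℤ → Type u} [∀ i, AddCommGroup (C i)] [∀ i, Module K (C i)]

/-- inclusion of a graded piece -/
noncomputable def ofT (i : ℤ) : C i →ₗ[K] Tot C := DirectSum.lof K ℤ C i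
end

variable {C : ℤ → Type u} [∀ i, AddCommGroup (C i)] [∀ i, Module K (C i)]
variable {C' : ℤ → Type u} [∀ i, AddCommGroup (C' i)] [∀ i, Module K (C' i)]

theorem ofT_self (i : ℤ) (x : C i) : (ofT K i x) i = x := DirectSum.of_eq_same i x

theorem ofT_ne (i j : ℤ) (h : i ≠ j) (x : C i) : (ofT K i x) j = 0 := DirectSum.of_eq_of_ne i j x h.symm

theorem ofT_inj (i : ℤ) {x y : C i} (h : ofT K i x = ofT K i y) : x = y := by
  rw [← ofT_self (K := K) i x, h, ofT_self]

theorem ofT_gcast {i j : ℤ} (h : i = j) (x : C i) : ofT K j (gcast h x) = ofT K i x := by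
  subst h; rfl

theorem gcast_map {i j : ℤ} (h : i = j) (f : ∀ i, C i → C' i) (x : C i) :
    f j (gcast h x) = gcast h (f i x) := by
  subst h; rfl

theorem gcast_zero {i j : ℤ} (h : i = j) : gcast h (0 : C i) = 0 := by
  subst h; rfl

theorem gcast_inj {i j : ℤ} (h : i = j) {x y : C i} (e : gcast h x = gcast h y) : x = y := by
  subst h; exact e

theorem tot_ext {W : Type*} [AddCommGroup W] [Module K W] {f g : Tot C →ₗ[K] W}
    (h : ∀ i x, f (ofT K i x) = g (ofT K i x)) : f = g :=
  DirectSum.linearMap_ext K fun n => LinearMap.ext (h n)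

/-- total differential -/
noncomputable def totD (d : ∀ i, C i →ₗ[K] C (i + 1)) : Tot C →ₗ[K] Tot C :=
  DirectSum.toModule K ℤ _ (fun i => ofT K (i + 1) ∘ₗ d i)

@[simp] theorem totD_of (d : ∀ i, C i →ₗ[K] C (i + 1)) (i : ℤ) (x : C i) :
    totD d (ofT K i x) = ofT K (i + 1) (d i x) := by
  simp [totD, ofT]

theorem totD_apply (d : ∀ i, C i →ₗ[K] C (i + 1)) (z : Tot C) (i j : ℤ) (h : i + 1 = j) :
    totD d z j = gcast h (d i (z i)) := by
  subst h
  change _ = d i (z i)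
  suffices e : DirectSum.component K ℤ C (i + 1) ∘ₗ totD d = d i ∘ₗ DirectSum.component K ℤ C i from
    LinearMap.congr_fun e z
  refine tot_ext fun k x => ?_
  simp only [LinearMap.comp_apply, totD_of]
  change (ofT K (k + 1) (d k x)) (i + 1) = d i ((ofT K k x) i)
  by_cases hk : k = i
  · subst hk; rw [ofT_self, ofT_self]
  · rw [ofT_ne _ _ (by omega), ofT_ne _ _ hk, map_zero]

/-- total map -/
noncomputable def totF (f : ∀ i, C i →ₗ[K] C' i) : Tot C →ₗ[K] Tot C' :=
  DirectSum.toModule K ℤ _ (fun i => ofT K i ∘ₗ f i)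

@[simp] theorem totF_of (f : ∀ i, C i →ₗ[K] C' i) (i : ℤ) (x : C i) :
    totF f (ofT K i x) = ofT K i (f i x) := by
  simp [totF, ofT]

theorem totF_apply (f : ∀ i, C i →ₗ[K] C' i) (z : Tot C) (i : ℤ) : totF f z i = f i (z i) := by
  suffices e : DirectSum.component K ℤ C' i ∘ₗ totF f = f i ∘ₗ DirectSum.component K ℤ C i from
    LinearMap.congr_fun e z
  refine tot_ext fun k x => ?_
  simp only [LinearMap.comp_apply, totF_of]
  change (ofT K k (f k x)) i = f i ((ofT K k x) i)
  by_cases hk : k = i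
  · subst hk; rw [ofT_self, ofT_self]
  · rw [ofT_ne _ _ hk, ofT_ne _ _ hk, map_zero]

/-- total bilinear map -/
noncomputable def totB (b : ∀ i j, C i →ₗ[K] C j →ₗ[K] C (i + j)) : Tot C →ₗ[K] Tot C →ₗ[K] Tot C :=
  DirectSum.toModule K ℤ _ (fun i => (DirectSum.toModule K ℤ (C i →ₗ[K] Tot C)
    (fun j => ((b i j).compr₂ (ofT K (i + j))).flip)).flip)

@[simp] theorem totB_of (b : ∀ i j, C i →ₗ[K] C j →ₗ[K] C (i + j)) (i j : ℤ) (x : C i) (y : C j) :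
    totB b (ofT K i x) (ofT K j y) = ofT K (i + j) (b i j x y) := by
  simp [totB, ofT]

/-- total parity -/
noncomputable def totE (C : ℤ → Type u) [∀ i, AddCommGroup (C i)] [∀ i, Module K (C i)] :
    Tot C →ₗ[K] Tot C :=
  DirectSum.toModule K ℤ _ (fun i => (-1 : K) ^ i • ofT K i)

@[simp] theorem totE_of (i : ℤ) (x : C i) :
    totE (K := K) C (ofT K i x) = (-1 : K) ^ i • ofT K i x := by
  simp [totE, ofT]

theorem tot_sum (x : Tot C) : ∃ t : Finset ℤ, x = ∑ i ∈ t, ofT K i (x i) := by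
  classical
  exact ⟨_, (DirectSum.sum_support_of x).symm⟩

theorem qi_tot (dC : ∀ i, C i →ₗ[K] C (i + 1)) (dD : ∀ i, C' i →ₗ[K] C' (i + 1))
    (f : ∀ i, C i →ₗ[K] C' i) (h : IsQIsoMap K dC dD f) : QI (totD dC) (totD dD) (totF f) := by
  have hcyc : ∀ {B : ℤ → Type u} [∀ i, AddCommGroup (B i)] [∀ i, Module K (B i)]
      (d : ∀ i, B i →ₗ[K] B (i + 1)) (y : Tot B), totD d y = 0 → ∀ i, d i (y i) = 0 := by
    intro B _ _ d y hy i
    have := totD_apply d y i (i + 1) rfl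
    rw [hy] at this
    exact this.symm
  refine ⟨fun y hy => ?_, fun x hx ⟨z, hz⟩ => ?_⟩
  · choose x z hx hxz using fun i => h.1 i (y i) (hcyc dD y hy i)
    obtain ⟨t, ht⟩ := tot_sum (K := K) y
    refine ⟨∑ i ∈ t, ofT K i (x i), ∑ i ∈ t, ofT K (i - 1) (z i), ?_, ?_⟩
    · rw [map_sum]; refine Finset.sum_eq_zero fun i _ => by simp [hx]
    · conv_rhs => rw [ht]
      rw [map_sum, map_sum, ← Finset.sum_add_distrib]
      refine Finset.sum_congr rfl fun i _ => ?_
      rw [totF_of, hxz, map_add, ofT_gcast, totD_of]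
  · choose w hw using fun i => h.2 i (x i) (hcyc dC x hx i) ⟨z (i - 1), by
      rw [← totF_apply, hz, totD_apply _ _ (i - 1) i (by omega)]⟩
    obtain ⟨t, ht⟩ := tot_sum (K := K) x
    refine ⟨∑ i ∈ t, ofT K (i - 1) (w i), ?_⟩
    rw [map_sum]
    conv_lhs => rw [ht]
    refine Finset.sum_congr rfl fun i _ => ?_
    rw [totD_of, ← ofT_gcast (K := K) (show i - 1 + 1 = i by omega), ← hw]

theorem qi_untot (dC : ∀ i, C i →ₗ[K] C (i + 1)) (dD : ∀ i, C' i →ₗ[K] C' (i + 1))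
    (f : ∀ i, C i →ₗ[K] C' i) (h : QI (totD dC) (totD dD) (totF f)) : IsQIsoMap K dC dD f := by
  refine ⟨fun i y hy => ?_, fun i x hx ⟨z, hz⟩ => ?_⟩
  · obtain ⟨x, z, hx, hxz⟩ := h.1 (ofT K i y) (by simp [hy])
    refine ⟨x i, z (i - 1), ?_, ?_⟩
    · have := totD_apply dC x i (i + 1) rfl
      rw [hx] at this
      exact this.symm
    · rw [← totF_apply, hxz, ← totD_apply]
      change (ofT K i y) i + _ = _
      rw [ofT_self]
  · obtain ⟨w, hw⟩ := h.2 (ofT K i x) (by simp [hx]) ⟨ofT K (i - 1) z, by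
      rw [totF_of, hz, ofT_gcast, totD_of]⟩
    refine ⟨w (i - 1), ?_⟩
    rw [← totD_apply, ← hw, ofT_self]

end totals

section
variable (K : Type u) [Field K] (A : ℤ → Type u)
  [∀ i, AddCommGroup (A i)] [∀ i, Module K (A i)] [DGLA K A]

/-- total space of a dgla -/
noncomputable def totSL : SL K (Tot A) where
  H i := LinearMap.range (ofT K i)
  top := by
    rw [eq_top_iff]
    intro x _
    obtain ⟨t, ht⟩ := tot_sum (K := K) x
    rw [ht]
    exact Submodule.sum_mem _ fun i _ => Submodule.mem_iSup_of_mem i ⟨_, rfl⟩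
  ε := totE A
  D := totD (DGLA.d (K := K) (A := A))
  β := totB (DGLA.bk (K := K) (A := A))
  eps := by rintro i _ ⟨x, rfl⟩; simp
  hD := by rintro i _ ⟨x, rfl⟩; simp
  hβ := by rintro i j _ _ ⟨x, rfl⟩ ⟨y, rfl⟩; simp
  DD := by rintro i _ ⟨x, rfl⟩; simp [DGLA.d_sq]
  anti := by
    rintro i j _ _ ⟨x, rfl⟩ ⟨y, rfl⟩
    rw [totB_of, totB_of, DGLA.antisymm, ofT_gcast, map_neg, map_smul]
  jac := by
    rintro i j k _ _ _ ⟨x, rfl⟩ ⟨y, rfl⟩ ⟨z, rfl⟩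
    simp only [totB_of]
    rw [DGLA.jacobi, map_add, map_smul, ofT_gcast, ofT_gcast]
  leib := by
    rintro i j _ _ ⟨x, rfl⟩ ⟨y, rfl⟩
    simp only [totB_of, totD_of]
    rw [DGLA.leibniz, map_add, map_smul, ofT_gcast, ofT_gcast]

variable {K A}
theorem totSLHom {A' : ℤ → Type u} [∀ i, AddCommGroup (A' i)] [∀ i, Module K (A' i)] [DGLA K A']
    (h : DGLAHom K A A') : SLHom (totSL K A) (totSL K A') (totF h.f) where
  H := by rintro i _ ⟨x, rfl⟩; exact ⟨h.f i x, by simp⟩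
  D x := by
    refine LinearMap.congr_fun (f := totF h.f ∘ₗ (totSL K A).D) (g := (totSL K A').D ∘ₗ totF h.f)
      (tot_ext fun i x => ?_) x
    simp [totSL, h.map_d]
  β x y := by
    refine LinearMap.congr_fun (LinearMap.congr_fun (f := (totSL K A).β.compr₂ (totF h.f))
      (g := (totSL K A').β.compl₁₂ (totF h.f) (totF h.f))
      (tot_ext fun i x => tot_ext fun j y => ?_) x) y
    simp [totSL, h.map_bk]

end
end PBWProof

namespace PBWProof

section
variable (K : Type u) [Field K] (U : ℤ → Type u)
  [∀ i, AddCommGroup (U i)] [∀ i, Module K (U i)] [DGAlg K U]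

/-- total multiplication -/
noncomputable def mu : Tot U →ₗ[K] Tot U →ₗ[K] Tot U := totB (DGAlg.mul (K := K) (B := U))

/-- total differential of a dg algebra -/
noncomputable def DT : Tot U →ₗ[K] Tot U := totD (DGAlg.d (K := K) (B := U))

/-- total unit -/
noncomputable def oneT : Tot U := ofT K 0 (DGAlg.one (K := K) (B := U))

variable {K U}

@[simp] theorem mu_of (i j : ℤ) (x : U i) (y : U j) : mu K U (ofT K i x) (ofT K j y) =
    ofT K (i + j) (DGAlg.mul (K := K) (B := U) i j x y) := totB_of _ _ _ _ _

@[simp] theorem DT_of (i : ℤ) (x : U i) : DT K U (ofT K i x) =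
    ofT K (i + 1) (DGAlg.d (K := K) (B := U) i x) := totD_of _ _ _

theorem mu_one (z : Tot U) : mu K U (oneT K U) z = z := by
  refine LinearMap.congr_fun (f := mu K U (oneT K U)) (g := LinearMap.id) (tot_ext fun i x => ?_) z
  rw [oneT, mu_of, DGAlg.one_mul, ofT_gcast]; rfl

theorem mu_one' (z : Tot U) : mu K U z (oneT K U) = z := by
  refine LinearMap.congr_fun (f := (mu K U).flip (oneT K U)) (g := LinearMap.id) (tot_ext fun i x => ?_) z
  rw [LinearMap.flip_apply, oneT, mu_of, DGAlg.mul_one, ofT_gcast]; rfl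

theorem mu_assoc (i j : ℤ) (x : U i) (y : U j) (z : Tot U) :
    mu K U (ofT K (i + j) (DGAlg.mul (K := K) (B := U) i j x y)) z =
      mu K U (ofT K i x) (mu K U (ofT K j y) z) := by
  refine LinearMap.congr_fun (f := mu K U (ofT K (i + j) (DGAlg.mul (K := K) (B := U) i j x y)))
    (g := mu K U (ofT K i x) ∘ₗ mu K U (ofT K j y)) (tot_ext fun k z => ?_) z
  rw [LinearMap.comp_apply, mu_of, mu_of, mu_of, DGAlg.mul_assoc, ofT_gcast]

theorem DT_mu (i : ℤ) (x : U i) (z : Tot U) :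
    DT K U (mu K U (ofT K i x) z) = mu K U (DT K U (ofT K i x)) z
      + (-1 : K) ^ i • mu K U (ofT K i x) (DT K U z) := by
  refine LinearMap.congr_fun (f := DT K U ∘ₗ mu K U (ofT K i x))
    (g := mu K U (DT K U (ofT K i x)) + (-1 : K) ^ i • (mu K U (ofT K i x) ∘ₗ DT K U))
    (tot_ext fun k z => ?_) z
  simp only [LinearMap.comp_apply, LinearMap.add_apply, LinearMap.smul_apply, mu_of, DT_of]
  rw [DGAlg.leibniz, map_add, map_smul, ofT_gcast, ofT_gcast]

variable {A : ℤ → Type u} [∀ i, AddCommGroup (A i)] [∀ i, Module K (A i)] [DGLA K A]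
  (ι : LieToAlgMap K A U)

/-- the structure map on totals -/
noncomputable def ioT : Tot A →ₗ[K] Tot U := totF ι.f

theorem ioT_D (x : Tot A) : ioT ι ((totSL K A).D x) = DT K U (ioT ι x) := by
  refine LinearMap.congr_fun (f := ioT ι ∘ₗ (totSL K A).D) (g := DT K U ∘ₗ ioT ι)
      (tot_ext fun i x => ?_) x
  simp [totSL, ioT, ι.map_d]

theorem ioT_β (i j : ℤ) (x : A i) (y : A j) (z : Tot U) :
    mu K U (ioT ι (ofT K i x)) (mu K U (ioT ι (ofT K j y)) z) =
    (-1 : K) ^ (i * j) • mu K U (ioT ι (ofT K j y)) (mu K U (ioT ι (ofT K i x)) z)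
     + mu K U (ioT ι ((totSL K A).β (ofT K i x) (ofT K j y))) z := by
  simp only [ioT, totSL, totB_of, totF_of, ι.map_bk, map_sub, map_smul, ofT_gcast,
    LinearMap.sub_apply, LinearMap.smul_apply, mu_assoc]
  abel

/-- pieces of the canonical map -/
noncomputable def pin : (n : ℕ) → TP K (Tot A) n →ₗ[K] Tot U
  | 0 => LinearMap.toSpanSingleton K _ (oneT K U) ∘ₗ (tE0 K (Tot A)).toLinearMap
  | n + 1 => TensorProduct.lift ((mu K U).compl₁₂ (ioT ι) (pin n)) ∘ₗ (tE K (Tot A) n).toLinearMap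

theorem pin_nil : pin ι 0 nil = oneT K U := by
  simp [pin, nil]

theorem pin_cons (n : ℕ) (x : Tot A) (w : TP K (Tot A) n) :
    pin ι (n + 1) (cons x w) = mu K U (ioT ι x) (pin ι n w) := by
  simp [pin, tE_cons]

/-- canonical map from the tensor space -/
noncomputable def piM : MM K (Tot A) →ₗ[K] Tot U := DirectSum.toModule K ℕ _ (pin ι)

theorem piM_inc (n : ℕ) (w : TP K (Tot A) n) : piM ι (inc n w) = pin ι n w := by
  simp [piM, inc]

theorem piM_cons (x : Tot A) (m : MM K (Tot A)) :
    piM ι (consM x m) = mu K U (ioT ι x) (piM ι m) := by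
  refine LinearMap.congr_fun (f := piM ι ∘ₗ consM x) (g := mu K U (ioT ι x) ∘ₗ piM ι)
      (inc_ext fun n w => ?_) m
  simp [piM_inc, pin_cons]

theorem pin_rel [CharZero K] (n i : ℕ) (hi : i < n) (w : TP K (Tot A) (n + 1)) :
    pin ι (n + 1) w = pin ι (n + 1) ((totSL K A).s (n + 1) i w) + pin ι n ((totSL K A).h n i w) := by
  suffices h : pin ι (n + 1) = pin ι (n + 1) ∘ₗ (totSL K A).s (n + 1) i + pin ι n ∘ₗ (totSL K A).h n i
    from LinearMap.congr_fun h w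
  induction i generalizing n with
  | zero =>
    obtain ⟨n, rfl⟩ := Nat.exists_eq_add_of_le' (show 1 ≤ n by omega)
    refine (totSL K A).cext2 fun i j x hx y hy w => ?_
    simp only [LinearMap.add_apply, LinearMap.comp_apply]
    rw [(totSL K A).s_zero n hx hy, SL.h_zero]
    obtain ⟨x, rfl⟩ := hx
    obtain ⟨y, rfl⟩ := hy
    simp only [pin_cons, map_smul]
    exact ioT_β ι i j x y _
  | succ i ih =>
    obtain ⟨n, rfl⟩ := Nat.exists_eq_add_of_le' (show 1 ≤ n by omega)
    refine cons_ext fun x w => ?_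
    have := LinearMap.congr_fun (ih n (by omega) w) w
    simp only [LinearMap.add_apply, LinearMap.comp_apply, SL.s_succ, SL.h_succ, pin_cons] at this ⊢
    rw [this, map_add]

theorem piM_Pt [CharZero K] (m : MM K (Tot A)) : piM ι ((totSL K A).Pt m) = piM ι m := by
  refine LinearMap.congr_fun (f := piM ι ∘ₗ (totSL K A).Pt) (g := piM ι) (inc_ext fun n w => ?_) m
  rw [LinearMap.comp_apply, SL.Pt_inc]
  refine (totSL K A).P_mod _ (fun n i hi w => ?_) n w
  simp only [piM_inc]
  exact pin_rel ι n i hi w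

theorem DT_one : DT K U (oneT K U) = 0 := by
  rw [oneT, DT_of, DGAlg.d_one, map_zero]

theorem piM_DM [CharZero K] (m : MM K (Tot A)) : piM ι ((totSL K A).DM m) = DT K U (piM ι m) := by
  refine LinearMap.congr_fun (f := piM ι ∘ₗ (totSL K A).DM) (g := DT K U ∘ₗ piM ι)
    (inc_ext fun n w => ?_) m
  simp only [LinearMap.comp_apply, SL.DM_inc, piM_inc]
  refine LinearMap.congr_fun (f := pin ι n ∘ₗ (totSL K A).Dn n) (g := DT K U ∘ₗ pin ι n) ?_ w
  clear w m
  induction n with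
  | zero => exact nil_ext (by simp [SL.Dn, pin_nil, DT_one])
  | succ n ih =>
    refine (totSL K A).cext fun i x hx w => ?_
    have := LinearMap.congr_fun ih w
    simp only [LinearMap.comp_apply] at this ⊢
    rw [SL.Dn_cons, map_add, pin_cons, pin_cons, pin_cons, (totSL K A).eps i x hx, ioT_D, this]
    obtain ⟨x, rfl⟩ := hx
    simp only [ioT, map_smul, LinearMap.smul_apply, totF_of]
    rw [DT_mu]

/-- the graded endomorphism pieces lying over `U` -/
noncomputable def Bsub (i : ℤ) : Submodule K (Module.End K (MM K (Tot A)) × U i) where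
  carrier := {p | ∀ m, piM ι (p.1 m) = mu K U (ofT K i p.2) (piM ι m)}
  add_mem' := by
    intro a b ha hb m
    simp only [Prod.fst_add, Prod.snd_add, LinearMap.add_apply, map_add, ha m, hb m]
  zero_mem' := by intro m; simp
  smul_mem' := by
    intro c a ha m
    simp only [Prod.smul_fst, Prod.smul_snd, LinearMap.smul_apply, map_smul, ha m]

/-- the graded pieces as types -/
abbrev BB (i : ℤ) : Type u := ↥(Bsub ι i)

theorem BB_gcast1 {i j : ℤ} (h : i = j) (x : BB ι i) : (gcast (C := BB ι) h x).1.1 = x.1.1 := by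
  subst h; rfl

theorem BB_gcast2 {i j : ℤ} (h : i = j) (x : BB ι i) : (gcast (C := BB ι) h x).1.2 = gcast h x.1.2 := by
  subst h; rfl

theorem DMDM [CharZero K] {V : Type u} [AddCommGroup V] [Module K V] (S : SL K V) (m : MM K V) :
    S.DM (S.DM m) = 0 := by
  refine LinearMap.congr_fun (f := S.DM ∘ₗ S.DM) (g := 0) (inc_ext fun n w => ?_) m
  simp only [LinearMap.comp_apply, SL.DM_inc, LinearMap.zero_apply]
  suffices h : S.Dn n ∘ₗ S.Dn n = 0 by
    have := LinearMap.congr_fun h w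
    simp only [LinearMap.comp_apply] at this
    rw [this]; simp
  clear w m
  induction n with
  | zero => simp [SL.Dn]
  | succ n ih =>
    refine cons_ext fun x w => ?_
    have := LinearMap.congr_fun ih w
    simp only [LinearMap.comp_apply] at this
    simp [S.DDx, S.eD, this]

variable [CharZero K]

/-- the differential of pieces -/
noncomputable def Bd (i : ℤ) : BB ι i →ₗ[K] BB ι (i + 1) where
  toFun p := ⟨((totSL K A).DM * p.1.1 - (-1 : K) ^ i • (p.1.1 * (totSL K A).DM),
      DGAlg.d (K := K) (B := U) i p.1.2), by
    intro m
    have h := p.2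
    change ∀ m, piM ι (p.1.1 m) = mu K U (ofT K i p.1.2) (piM ι m) at h
    simp only [LinearMap.sub_apply, LinearMap.smul_apply, Module.End.mul_apply, map_sub, map_smul,
      piM_DM, h]
    rw [DT_mu, DT_of]
    abel⟩
  map_add' p q := by
    apply Subtype.ext
    refine Prod.ext ?_ ?_
    · simp [mul_add, add_mul]; abel
    · simp
  map_smul' c p := by
    apply Subtype.ext
    refine Prod.ext ?_ ?_
    · simp [smul_sub, smul_comm c]
    · simp

/-- multiplication of pieces -/
noncomputable def Bmul (i j : ℤ) : BB ι i →ₗ[K] BB ι j →ₗ[K] BB ι (i + j) :=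
  LinearMap.mk₂ K (fun p q => ⟨(p.1.1 * q.1.1, DGAlg.mul (K := K) (B := U) i j p.1.2 q.1.2), by
    intro m
    have h := p.2
    have h' := q.2
    change ∀ m, piM ι (p.1.1 m) = mu K U (ofT K i p.1.2) (piM ι m) at h
    change ∀ m, piM ι (q.1.1 m) = mu K U (ofT K j q.1.2) (piM ι m) at h'
    simp only [Module.End.mul_apply, h, h', mu_assoc]⟩)
  (by intros; apply Subtype.ext; refine Prod.ext ?_ ?_ <;> simp [add_mul])
  (by intros; apply Subtype.ext; refine Prod.ext ?_ ?_ <;> simp)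
  (by intros; apply Subtype.ext; refine Prod.ext ?_ ?_ <;> simp [mul_add])
  (by intros; apply Subtype.ext; refine Prod.ext ?_ ?_ <;> simp)

noncomputable instance BBalg : DGAlg K (BB ι) where
  mul := Bmul ι
  one := ⟨(1, DGAlg.one (K := K) (B := U)), fun m => (mu_one (piM ι m)).symm⟩
  d := Bd ι
  d_sq i x := by
    apply Subtype.ext
    refine Prod.ext ?_ ?_
    · refine LinearMap.ext fun m => ?_
      simp [Bd, DMDM, zpow_add₀]
    · simp [Bd, DGAlg.d_sq]
  mul_assoc p q r x y z := by
    apply Subtype.ext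
    refine Prod.ext ?_ ?_
    · rw [BB_gcast1]; simp [Bmul, mul_assoc]
    · rw [BB_gcast2]; simp [Bmul, DGAlg.mul_assoc]
  one_mul i x := by
    apply Subtype.ext
    refine Prod.ext ?_ ?_
    · rw [BB_gcast1]; simp [Bmul]
    · rw [BB_gcast2]; simp [Bmul, DGAlg.one_mul]
  mul_one i x := by
    apply Subtype.ext
    refine Prod.ext ?_ ?_
    · rw [BB_gcast1]; simp [Bmul]
    · rw [BB_gcast2]; simp [Bmul, DGAlg.mul_one]
  leibniz i j x y := by
    apply Subtype.ext
    refine Prod.ext ?_ ?_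
    · refine LinearMap.ext fun m => ?_
      simp [Bmul, Bd, BB_gcast1, zpow_add₀, smul_sub, smul_smul]
    · simp [Bmul, Bd, DGAlg.leibniz, BB_gcast2]
  d_one := by
    apply Subtype.ext
    refine Prod.ext ?_ ?_
    · simp [Bd]
    · simp [Bd, DGAlg.d_one]

theorem DM_consM {V : Type u} [AddCommGroup V] [Module K V] (S : SL K V) (x : V) (m : MM K V) :
    S.DM (consM x m) = consM (S.D x) m + consM (S.ε x) (S.DM m) := by
  refine LinearMap.congr_fun (f := S.DM ∘ₗ consM x) (g := consM (S.D x) + consM (S.ε x) ∘ₗ S.DM)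
    (inc_ext fun n w => ?_) m
  simp

theorem Pt_rel {V : Type u} [AddCommGroup V] [Module K V] (S : SL K V) {i j : ℤ} {x y : V}
    (hx : x ∈ S.H i) (hy : y ∈ S.H j) (m : MM K V) :
    S.Pt (consM x (consM y m)) = (-1 : K) ^ (i * j) • S.Pt (consM y (consM x m))
      + S.Pt (consM (S.β x y) m) := by
  refine LinearMap.congr_fun (f := S.Pt ∘ₗ consM x ∘ₗ consM y)
    (g := (-1 : K) ^ (i * j) • (S.Pt ∘ₗ consM y ∘ₗ consM x) + S.Pt ∘ₗ consM (S.β x y))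
    (inc_ext fun n w => ?_) m
  have := S.P_rel (n + 1) 0 (by omega) (cons x (cons y w))
  rw [S.s_zero n hx hy, SL.h_zero] at this
  simpa using this

/-- the Lie map into the pieces -/
noncomputable def Bio : LieToAlgMap K A (BB ι) where
  f i := LinearMap.codRestrict (Bsub ι i)
    (LinearMap.prod ((consM.compr₂ (totSL K A).Pt) ∘ₗ ofT K i) (ι.f i)) (by
      intro x m
      simp [piM_Pt, piM_cons, ioT])
  map_d i x := by
    apply Subtype.ext
    refine Prod.ext ?_ ?_
    · refine LinearMap.ext fun m => ?_
      change (totSL K A).Pt (consM (ofT K (i + 1) (DGLA.d (K := K) (A := A) i x)) m) =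
        (totSL K A).DM ((totSL K A).Pt (consM (ofT K i x) m)) -
          (-1 : K) ^ i • (totSL K A).Pt (consM (ofT K i x) ((totSL K A).DM m))
      rw [SL.DM_Pt, DM_consM, (totSL K A).eps i _ ⟨x, rfl⟩]
      simp [totSL]
    · exact ι.map_d i x
  map_bk i j x y := by
    apply Subtype.ext
    refine Prod.ext ?_ ?_
    · refine LinearMap.ext fun m => ?_
      rw [Submodule.coe_sub, Submodule.coe_smul, Prod.fst_sub, Prod.smul_fst, BB_gcast1]
      change (totSL K A).Pt (consM (ofT K (i + j) (DGLA.bk (K := K) (A := A) i j x y)) m) =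
        (totSL K A).Pt (consM (ofT K i x) ((totSL K A).Pt (consM (ofT K j y) m))) -
          (-1 : K) ^ (i * j) • (totSL K A).Pt (consM (ofT K j y) ((totSL K A).Pt (consM (ofT K i x) m)))
      rw [SL.Pt_cons, SL.Pt_cons, Pt_rel (totSL K A) (i := i) (j := j) ⟨x, rfl⟩ ⟨y, rfl⟩]
      simp [totSL]
    · refine (ι.map_bk i j x y).trans ?_
      rw [Submodule.coe_sub, Submodule.coe_smul, Prod.snd_sub, Prod.smul_snd, BB_gcast2]
      rfl

/-- projection back to `U` -/
noncomputable def Bpr : DGAlgHom K (BB ι) U where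
  f i := LinearMap.snd K _ _ ∘ₗ (Bsub ι i).subtype
  map_d i x := rfl
  map_mul i j x y := rfl
  map_one := rfl

/-- composition of dg algebra maps -/
def hcomp {X Y Z : ℤ → Type u}
    [∀ i, AddCommGroup (X i)] [∀ i, Module K (X i)] [DGAlg K X]
    [∀ i, AddCommGroup (Y i)] [∀ i, Module K (Y i)] [DGAlg K Y]
    [∀ i, AddCommGroup (Z i)] [∀ i, Module K (Z i)] [DGAlg K Z]
    (g : DGAlgHom K Y Z) (f : DGAlgHom K X Y) : DGAlgHom K X Z where
  f i := g.f i ∘ₗ f.f i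
  map_d i x := by simp [f.map_d, g.map_d]
  map_mul i j x y := by simp [f.map_mul, g.map_mul]
  map_one := by simp [f.map_one, g.map_one]

/-- identity -/
def hid {X : ℤ → Type u}
    [∀ i, AddCommGroup (X i)] [∀ i, Module K (X i)] [DGAlg K X] : DGAlgHom K X X where
  f i := LinearMap.id
  map_d i x := rfl
  map_mul i j x y := rfl
  map_one := rfl

theorem exists_section (hU : IsEnvelope K A U ι) : ∃ s : Tot U →ₗ[K] MM K (Tot A),
    (∀ u, piM ι (s u) = u) ∧ (∀ m, s (piM ι m) = (totSL K A).Pt m) ∧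
    (∀ u, s (DT K U u) = (totSL K A).DM (s u)) ∧ s (oneT K U) = inc 0 nil := by
  obtain ⟨Ψ, hΨ, -⟩ := hU.universal (BB ι) inferInstance inferInstance (BBalg ι) (Bio ι)
  have h2 : ∀ i (u : U i), (Ψ.f i u).1.2 = u := by
    have := (hU.universal U inferInstance inferInstance inferInstance ι).unique
      (y₁ := hcomp (Bpr ι) Ψ) (y₂ := hid)
      (fun i x => by
        change (Ψ.f i (ι.f i x)).1.2 = _
        rw [hΨ]; rfl)
      (fun i x => rfl)
    intro i u
    exact LinearMap.congr_fun (congrFun (congrArg DGAlgHom.f this) i) u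
  have h3 : ∀ i (u : U i) m, piM ι ((Ψ.f i u).1.1 m) = mu K U (ofT K i u) (piM ι m) := by
    intro i u m
    have : piM ι ((Ψ.f i u).1.1 m) = mu K U (ofT K i (Ψ.f i u).1.2) (piM ι m) := (Ψ.f i u).2 m
    rwa [h2] at this
  let e : MM K (Tot A) := inc 0 nil
  have he : piM ι e = oneT K U := by rw [piM_inc, pin_nil]
  obtain ⟨s, hs⟩ : ∃ s : Tot U →ₗ[K] MM K (Tot A), ∀ i u, s (ofT K i u) = (Ψ.f i u).1.1 e :=
    ⟨DirectSum.toModule K ℤ _ (fun i => LinearMap.applyₗ e ∘ₗ LinearMap.fst K _ _ ∘ₗ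
      (Bsub ι i).subtype ∘ₗ Ψ.f i), by simp [ofT]⟩
  have s1 : s (oneT K U) = e := by
    rw [oneT, hs, Ψ.map_one]; rfl
  have smul : ∀ x u, s (mu K U (ioT ι x) u) = (totSL K A).Pt (consM x (s u)) := by
    intro x u
    refine LinearMap.congr_fun (LinearMap.congr_fun (f := ((mu K U).comp (ioT ι)).compr₂ s)
      (g := (consM.compr₂ (totSL K A).Pt).compl₂ s)
      (tot_ext fun i x => tot_ext fun j y => ?_) x) u
    simp only [LinearMap.compr₂_apply, LinearMap.comp_apply, LinearMap.compl₂_apply, ioT, totF_of, mu_of,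
      hs, Ψ.map_mul, hΨ]
    rfl
  refine ⟨s, fun u => ?_, fun m => ?_, fun u => ?_, s1⟩
  · refine LinearMap.congr_fun (f := piM ι ∘ₗ s) (g := LinearMap.id) (tot_ext fun i u => ?_) u
    rw [LinearMap.comp_apply, hs, h3, he, mu_one']
    rfl
  · refine LinearMap.congr_fun (f := s ∘ₗ piM ι) (g := (totSL K A).Pt) (inc_ext fun n w => ?_) m
    rw [LinearMap.comp_apply, piM_inc, SL.Pt_inc]
    refine LinearMap.congr_fun (f := s ∘ₗ pin ι n) (g := (totSL K A).P n) ?_ w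
    clear w m
    induction n with
    | zero => exact nil_ext (by simp [pin_nil, s1, SL.P, e])
    | succ n ih =>
      refine cons_ext fun x w => ?_
      have := LinearMap.congr_fun ih w
      rw [LinearMap.comp_apply] at this
      rw [LinearMap.comp_apply, pin_cons, smul, this, ← SL.Pt_inc, SL.Pt_cons, consM_inc, SL.Pt_inc]
  · refine LinearMap.congr_fun (f := s ∘ₗ DT K U) (g := (totSL K A).DM ∘ₗ s) (tot_ext fun i u => ?_) u
    rw [LinearMap.comp_apply, LinearMap.comp_apply, DT_of, hs, hs, Ψ.map_d]
    change (totSL K A).DM ((Ψ.f i u).1.1 e) - (-1 : K) ^ i • (Ψ.f i u).1.1 ((totSL K A).DM e) = _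
    have : (totSL K A).DM e = 0 := by simp [e, SL.Dn]
    rw [this]; simp

theorem part1 {A' : ℤ → Type u}
    [∀ i, AddCommGroup (A' i)] [∀ i, Module K (A' i)] [DGLA K A']
    (h : DGLAHom K A A')
    (hqis : IsQIsoMap K (DGLA.d (K := K) (A := A)) (DGLA.d (K := K) (A := A')) h.f)
    (hU : IsEnvelope K A U ι)
    {U' : ℤ → Type u} [∀ i, AddCommGroup (U' i)] [∀ i, Module K (U' i)] [DGAlg K U']
    (ι' : LieToAlgMap K A' U') (hU' : IsEnvelope K A' U' ι')
    (F : DGAlgHom K U U')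
    (hF : ∀ i (x : A i), F.f i (ι.f i x) = ι'.f i (h.f i x)) :
    IsQIsoMap K (DGAlg.d (K := K) (B := U)) (DGAlg.d (K := K) (B := U')) F.f := by
  apply qi_untot
  have hq := (totSLHom h).qiM (qi_tot _ _ _ hqis)
  obtain ⟨s, a1, a2, a3, -⟩ := exists_section ι hU
  obtain ⟨s', b1, b2, b3, -⟩ := exists_section ι' hU'
  have hmu : ∀ x y, totF F.f (mu K U x y) = mu K U' (totF F.f x) (totF F.f y) := by
    intro x y
    refine LinearMap.congr_fun (LinearMap.congr_fun (f := (mu K U).compr₂ (totF F.f))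
      (g := (mu K U').compl₁₂ (totF F.f) (totF F.f))
      (tot_ext fun i x => tot_ext fun j y => ?_) x) y
    simp [F.map_mul]
  have hio : ∀ x, totF F.f (ioT ι x) = ioT ι' (totF h.f x) := by
    intro x
    refine LinearMap.congr_fun (f := totF F.f ∘ₗ ioT ι) (g := ioT ι' ∘ₗ totF h.f)
      (tot_ext fun i x => ?_) x
    simp [ioT, hF]
  have hpi : ∀ m, totF F.f (piM ι m) = piM ι' (XM (totF h.f) m) := by
    intro m
    refine LinearMap.congr_fun (f := totF F.f ∘ₗ piM ι) (g := piM ι' ∘ₗ XM (totF h.f))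
      (inc_ext fun n w => ?_) m
    simp only [LinearMap.comp_apply, XM_inc, piM_inc]
    refine LinearMap.congr_fun (f := totF F.f ∘ₗ pin ι n) (g := pin ι' n ∘ₗ Xmap (totF h.f) n) ?_ w
    clear w m
    induction n with
    | zero => exact nil_ext (by simp [pin_nil, oneT, F.map_one])
    | succ n ih =>
      refine cons_ext fun x w => ?_
      have := LinearMap.congr_fun ih w
      simp only [LinearMap.comp_apply] at this
      simp only [LinearMap.comp_apply, pin_cons, Xmap_cons, hmu, hio, this]
  refine qi_retract _ _ _ (DT K U) (DT K U') (totF F.f) s (piM ι) s' (piM ι') a3 (piM_DM ι) b3 (piM_DM ι')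
    a1 b1 ?_ hpi hq
  intro u
  rw [← a1 u, a2, (totSLHom h).XP, hpi, b2]

/-- the zero object -/
noncomputable def zeroSL : SL K PUnit.{u + 1} where
  H _ := ⊤
  top := by simp
  ε := 0
  D := 0
  β := 0
  eps _ _ _ := rfl
  hD _ _ _ := trivial
  hβ _ _ _ _ _ _ := trivial
  DD _ _ _ := rfl
  anti _ _ _ _ _ _ := rfl
  jac _ _ _ _ _ _ _ _ _ := rfl
  leib _ _ _ _ _ _ := rfl

theorem part2 (hacyclic : ∀ (i : ℤ) (x : A i), DGLA.d (K := K) (A := A) i x = 0 →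
      ∃ y : A (i - 1), gcast (C := A) (show i - 1 + 1 = i by omega)
        (DGLA.d (K := K) (A := A) (i - 1) y) = x)
    (hU : IsEnvelope K A U ι) :
    (∀ u, DT K U u = 0 → ∃ (c : K) (z : Tot U), u = c • oneT K U + DT K U z) ∧
    (∀ (c : K) (z : Tot U), DT K U z = c • oneT K U → c = 0) := by
  obtain ⟨s, a1, a2, a3, a4⟩ := exists_section ι hU
  have h0 : SLHom (zeroSL (K := K)) (totSL K A) 0 := ⟨by simp, by simp, by simp⟩
  have hq0 : QI (zeroSL (K := K)).D (totSL K A).D 0 := by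
    refine ⟨fun y hy => ?_, fun x hx _ => ⟨0, rfl⟩⟩
    have := (qi_tot (K := K) (C := A) (C' := A) (DGLA.d (K := K) (A := A)) (DGLA.d (K := K) (A := A))
      (fun _ => 0) ⟨fun i y hy => ?_, fun i x hx _ => ?_⟩).1 y hy
    · obtain ⟨x, z, -, h⟩ := this
      refine ⟨0, z, rfl, ?_⟩
      have e : totF (K := K) (C := A) (C' := A) (fun _ => 0) x = 0 := by
        refine LinearMap.congr_fun (f := totF _) (g := 0) (tot_ext fun i x => ?_) x
        simp
      rw [e] at h
      rw [LinearMap.zero_apply]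
      exact h
    · obtain ⟨z, hz⟩ := hacyclic i (-y) (by simp [hy])
      exact ⟨0, z, by simp, by rw [hz]; simp⟩
    · obtain ⟨z, hz⟩ := hacyclic i x hx
      exact ⟨z, hz.symm⟩
  have hq := h0.qiM hq0
  have hsub : ∀ n, Subsingleton (TP K PUnit.{u + 1} (n + 1)) := fun n =>
    (tE K PUnit.{u + 1} n).toEquiv.subsingleton
  have hx : ∀ x : MM K PUnit.{u + 1}, ∃ c : K, x = c • inc 0 nil := by
    intro x
    induction x using DirectSum.induction_on with
    | zero => exact ⟨0, by simp⟩
    | of n w =>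
      match n with
      | 0 =>
        refine ⟨tE0 K _ w, ?_⟩
        rw [← map_smul]
        change inc 0 w = _
        congr 1
        apply (tE0 K PUnit.{u + 1}).injective
        simp [nil]
      | n + 1 =>
        refine ⟨0, ?_⟩
        change inc (n + 1) w = _
        rw [Subsingleton.elim w 0]
        simp
    | add a b ha hb =>
      obtain ⟨c, rfl⟩ := ha
      obtain ⟨d, rfl⟩ := hb
      exact ⟨c + d, by rw [add_smul]⟩
  have hpi : piM ι (inc 0 nil) = oneT K U := by rw [piM_inc, pin_nil]
  refine ⟨fun u hu => ?_, fun c z hz => ?_⟩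
  · obtain ⟨x, z, -, h⟩ := hq.1 (s u) (by rw [← a3, hu, map_zero])
    obtain ⟨c, rfl⟩ := hx x
    have := congrArg (piM ι) h
    rw [map_smul, XM_inc, Xmap_nil, map_smul, hpi, map_add, a1, piM_DM] at this
    exact ⟨c, - piM ι z, by rw [this, map_neg]; abel⟩
  · have e : (zeroSL (K := K)).DM (inc 0 nil) = 0 := by simp [SL.Dn]
    obtain ⟨w, hw⟩ := hq.2 (c • inc 0 nil) (by rw [map_smul, e, smul_zero]) ⟨s z, by
      rw [← a3, hz, map_smul, map_smul, a4, XM_inc, Xmap_nil]⟩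
    obtain ⟨c', rfl⟩ := hx w
    rw [map_smul, e, smul_zero, ← map_smul] at hw
    have h1 : c • (nil : TP K PUnit.{u + 1} 0) = 0 := by
      have := congrArg (DirectSum.component K ℕ (TP K PUnit.{u + 1}) 0) hw
      simpa [inc] using this
    have := congrArg (tE0 K PUnit.{u + 1}) h1
    simpa [nil] using this

end
end PBWProof


/-- A quasi-isomorphism `f : 𝔤 → 𝔥` of dglas over a field of characteristic
zero induces a quasi-isomorphism `U(𝔤) → U(𝔥)` of universal enveloping dg algebras.
In particular, since `Cn(𝔤)` is acyclic, for the universal envelope `(E, ιE)` of any acyclic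
dgla (such as `Cn(𝔤)`), the unit map `k = U(0) → U(Cn(𝔤))` is a quasi-isomorphism, i.e. the
cohomology of `E` is `k`, concentrated in degree `0`. -/
theorem stmt8 {K : Type u} [Field K] [CharZero K]
    (A A' : ℤ → Type u)
    [∀ i, AddCommGroup (A i)] [∀ i, Module K (A i)] [DGLA K A]
    [∀ i, AddCommGroup (A' i)] [∀ i, Module K (A' i)] [DGLA K A']
    (h : DGLAHom K A A')
    (hqis : IsQIsoMap K (DGLA.d (K := K) (A := A)) (DGLA.d (K := K) (A := A')) h.f)
    (U : ℤ → Type u) [∀ i, AddCommGroup (U i)] [∀ i, Module K (U i)] [DGAlg K U]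
    (ι : LieToAlgMap K A U) (hU : IsEnvelope K A U ι)
    (U' : ℤ → Type u) [∀ i, AddCommGroup (U' i)] [∀ i, Module K (U' i)] [DGAlg K U']
    (ι' : LieToAlgMap K A' U') (hU' : IsEnvelope K A' U' ι')
    (F : DGAlgHom K U U')
    (hF : ∀ i (x : A i), F.f i (ι.f i x) = ι'.f i (h.f i x))
    -- data for the "in particular" statement: the envelope of an acyclic dgla such as `Cn(𝔤)`
    (C : ℤ → Type u) [∀ i, AddCommGroup (C i)] [∀ i, Module K (C i)] [DGLA K C]
    (hacyclic : ∀ (i : ℤ) (x : C i), DGLA.d (K := K) (A := C) i x = 0 →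
      ∃ y : C (i - 1), gcast (C := C) (show i - 1 + 1 = i by omega)
        (DGLA.d (K := K) (A := C) (i - 1) y) = x)
    (E : ℤ → Type u) [∀ i, AddCommGroup (E i)] [∀ i, Module K (E i)] [DGAlg K E]
    (ιE : LieToAlgMap K C E) (hE : IsEnvelope K C E ιE) :
    IsQIsoMap K (DGAlg.d (K := K) (B := U)) (DGAlg.d (K := K) (B := U')) F.f ∧
    ((∀ (i : ℤ) (x : E i), i ≠ 0 → DGAlg.d (K := K) (B := E) i x = 0 →
        ∃ y : E (i - 1), gcast (C := E) (show i - 1 + 1 = i by omega)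
          (DGAlg.d (K := K) (B := E) (i - 1) y) = x) ∧
      (∀ x : E 0, DGAlg.d (K := K) (B := E) 0 x = 0 →
        ∃ (c : K) (y : E (-1)),
          x = c • DGAlg.one (K := K) (B := E)
            + gcast (C := E) (show (-1 : ℤ) + 1 = 0 by omega)
                (DGAlg.d (K := K) (B := E) (-1) y)) ∧
      (∀ c : K, (∃ y : E (-1),
          gcast (C := E) (show (-1 : ℤ) + 1 = 0 by omega)
            (DGAlg.d (K := K) (B := E) (-1) y) = c • DGAlg.one (K := K) (B := E)) → c = 0)) := by
  refine ⟨PBWProof.part1 ι h hqis hU ι' hU' F hF, ?_, ?_, ?_⟩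
  · intro i x hi hx
    obtain ⟨c, z, hz⟩ := (PBWProof.part2 ιE hacyclic hE).1 (PBWProof.ofT K i x)
      (by rw [PBWProof.DT_of, hx, map_zero])
    refine ⟨z (i - 1), ?_⟩
    have e := congrArg (fun t : PBWProof.Tot E => t i) hz
    change (PBWProof.ofT K i x) i = c • (PBWProof.ofT K 0 (DGAlg.one (K := K) (B := E))) i
      + (PBWProof.totD _ z) i at e
    rw [PBWProof.ofT_self, PBWProof.ofT_ne _ _ hi.symm, smul_zero, zero_add,
      PBWProof.totD_apply _ z (i - 1) i (by omega)] at e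
    exact e.symm
  · intro x hx
    obtain ⟨c, z, hz⟩ := (PBWProof.part2 ιE hacyclic hE).1 (PBWProof.ofT K 0 x)
      (by rw [PBWProof.DT_of, hx, map_zero])
    refine ⟨c, z (-1), ?_⟩
    have e := congrArg (fun t : PBWProof.Tot E => t 0) hz
    change (PBWProof.ofT K 0 x) 0 = c • (PBWProof.ofT K 0 (DGAlg.one (K := K) (B := E))) 0
      + (PBWProof.totD _ z) 0 at e
    rw [PBWProof.ofT_self, PBWProof.ofT_self,
      PBWProof.totD_apply _ z (-1) 0 (by omega)] at e
    exact e
  · rintro c ⟨y, hy⟩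
    refine (PBWProof.part2 ιE hacyclic hE).2 c (PBWProof.ofT K (-1) y) ?_
    rw [PBWProof.DT_of, ← PBWProof.ofT_gcast (K := K) (show (-1 : ℤ) + 1 = 0 by omega), hy, map_smul]
    rfl
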